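/- arXiv:1205.7018 — 3 statements merged into one kernel-verified Lean document; each statement's English description precedes it below -/
import Mathlib

section
/- Let ε > 0 and let f : ℝ → ℝ be twice continuously differentiable. Let L ⊆ (0, 2ε] be a nondegenerate interval and let a, b : L → ℝ be differentiable with b(ℓ) − a(ℓ) = ℓ, a'(ℓ) < 0 and b'(ℓ) > 0 for all ℓ ∈ L (so the chords [A(ℓ),B(ℓ)] joining A(ℓ) = (a(ℓ), a(ℓ)²) and B(ℓ) = (b(ℓ), b(ℓ)²) are pairwise disjoint). Let Ω_ch be the union of these chords and define B : Ω_ch → ℝ on the chord of parameter ℓ by B(x) = ((f(b(ℓ)) − f(a(ℓ)))·x₁ + b(ℓ)f(a(ℓ)) − a(ℓ)f(b(ℓ)))/(b(ℓ) − a(ℓ)). Then: (i) the partial derivative ∂B/∂x₂ exists at interior points of Ω_ch and is constant along each chord if and only if every pair (a(ℓ), b(ℓ)) satisfies the chord equation; (ii) if every pair (a(ℓ), b(ℓ)) satisfies the chord equation, then ∂B/∂x₂ = (f'(b(ℓ)) − f'(a(ℓ)))/(2(b(ℓ) − a(ℓ))) at every point of the chord of parameter ℓ, for each ℓ the quantities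 D_L(a(ℓ),b(ℓ)) and D_R(a(ℓ),b(ℓ)) have the same sign, and B is locally concave on Ω_ch if and only if D_L(a(ℓ),b(ℓ)) ≤ 0 for all ℓ ∈ L, which holds if and only if D_R(a(ℓ),b(ℓ)) ≤ 0 for all ℓ ∈ L. -/
open Set Real

/-- Local concavity on a subset of the plane. -/
def LocallyConcaveOn (Ω : Set (ℝ × ℝ)) (G : ℝ × ℝ → ℝ) : Prop :=
  ∀ x y : ℝ × ℝ, x ∈ Ω → y ∈ Ω → segment ℝ x y ⊆ Ω →
    ∀ α β : ℝ, 0 ≤ α → 0 ≤ β → α + β = 1 →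
      α * G x + β * G y ≤ G (α • x + β • y)

/-- `D_L(a,b) = f''(a) − ⟨f''⟩_{[a,b]}`. -/
noncomputable def DLdiff (f : ℝ → ℝ) (a b : ℝ) : ℝ :=
  deriv (deriv f) a - (deriv f b - deriv f a) / (b - a)

/-- `D_R(a,b) = f''(b) − ⟨f''⟩_{[a,b]}`. -/
noncomputable def DRdiff (f : ℝ → ℝ) (a b : ℝ) : ℝ :=
  deriv (deriv f) b - (deriv f b - deriv f a) / (b - a)

/-- The chord equation for the pair `(a, b)`. -/
def chordEq (f : ℝ → ℝ) (a b : ℝ) : Prop :=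
  (f b - f a) / (b - a) = (deriv f a + deriv f b) / 2

/-- The chord with parameter `ℓ`. -/
noncomputable def chordSeg (a b : ℝ → ℝ) (ℓ : ℝ) : Set (ℝ × ℝ) :=
  segment ℝ (a ℓ, (a ℓ) ^ 2) (b ℓ, (b ℓ) ^ 2)

/-- The domain `Ω_ch` foliated by the chords with parameters in `L`. -/
noncomputable def chordDomain (a b : ℝ → ℝ) (L : Set ℝ) : Set (ℝ × ℝ) :=
  {x | ∃ ℓ ∈ L, x ∈ chordSeg a b ℓ}

/-!
Let `h ℓ x` be the height over `x` of the chord of parameter `ℓ`, and `v ℓ x` the value of the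
interpolant there. On a vertical line `h · x` is strictly increasing, so the interpolant is
`v · x ∘ (h · x)⁻¹` and its vertical derivative is `∂v/∂ℓ / ∂h/∂ℓ`, a quotient of two affine
functions of `x`. The quotient is constant in `x` exactly when the chord equation holds, and its
value is then `q ℓ = (f'(b) - f'(a)) / (2 (b - a))`. Differentiating the chord equation in `ℓ` gives
`a' D_L + b' D_R = 0`, whence `q' = -a' D_L / (b - a)`. If the interpolant is locally concave, then
it is concave on vertical segments, so `q` decreases and `D_L ≤ 0`. Conversely, with `x` and `s`
fixed, the value at `(x, s)` of the tangent plane along the chord of parameter `m` has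
`m`-derivative `q' m * (s - h m x)`; when `q' ≤ 0` it is smallest where `h m x = s`, so every
tangent plane lies above the graph.
-/

open Filter Topology

section Calculus

theorem verticalSlice_mem_nhds {X Y : Type*} [TopologicalSpace X] [TopologicalSpace Y]
    {Ω : Set (X × Y)} {p : X × Y} (hp : p ∈ interior Ω) : {s | (p.1, s) ∈ Ω} ∈ 𝓝 p.2 :=
  (Continuous.prodMk_right p.1).continuousAt.preimage_mem_nhds (mem_interior_iff_mem_nhds.1 hp)

theorem continuousWithinAt_image_of_strictMonoOn_of_leftInvOn {α β : Type*}
    [LinearOrder α] [TopologicalSpace α] [OrderTopology α]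
    [LinearOrder β] [TopologicalSpace β] [OrderClosedTopology β]
    {h : α → β} {g : β → α} {I : Set α} {t : α} (hI : I.OrdConnected) (hh : StrictMonoOn h I)
    (hg : LeftInvOn g h I) (ht : t ∈ I) : ContinuousWithinAt g (h '' I) (h t) := by
  rw [ContinuousWithinAt, hg ht]
  refine tendsto_order.2 ⟨fun u hut => ?_, fun u htu => ?_⟩
  · by_cases hu : u ∈ I
    · filter_upwards [self_mem_nhdsWithin, mem_nhdsWithin_of_mem_nhds (Ioi_mem_nhds (hh hu ht hut))]
      rintro _ ⟨v, hv, rfl⟩ huv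
      rw [hg hv]
      exact (hh.lt_iff_lt hu hv).1 huv
    · filter_upwards [self_mem_nhdsWithin]
      rintro _ ⟨v, hv, rfl⟩
      rw [hg hv]
      exact lt_of_not_ge fun hvu => hu (hI.out hv ht ⟨hvu, hut.le⟩)
  · by_cases hu : u ∈ I
    · filter_upwards [self_mem_nhdsWithin, mem_nhdsWithin_of_mem_nhds (Iio_mem_nhds (hh ht hu htu))]
      rintro _ ⟨v, hv, rfl⟩ hvu
      rw [hg hv]
      exact (hh.lt_iff_lt hv hu).1 hvu
    · filter_upwards [self_mem_nhdsWithin]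
      rintro _ ⟨v, hv, rfl⟩
      rw [hg hv]
      exact lt_of_not_ge fun huv => hu (hI.out ht hv ⟨htu.le, huv⟩)

theorem hasDerivWithinAt_image_of_strictMonoOn {φ h v : ℝ → ℝ} {h' v' t : ℝ} {I : Set ℝ}
    (hI : I.OrdConnected) (hmono : StrictMonoOn h I) (ht : t ∈ I)
    (hφ : ∀ u ∈ I, φ (h u) = v u) (hh : HasDerivWithinAt h h' I t) (h'_ne : h' ≠ 0)
    (hv : HasDerivWithinAt v v' I t) : HasDerivWithinAt φ (v' / h') (h '' I) (h t) := by
  have hinv : LeftInvOn (Function.invFunOn h I) h I := hmono.injOn.leftInvOn_invFunOn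
  set g := Function.invFunOn h I
  have g_tendsto : Tendsto g (𝓝[h '' I \ {h t}] h t) (𝓝[I \ {t}] t) := by
    refine tendsto_nhdsWithin_iff.2 ⟨?_, ?_⟩
    · have hcont := continuousWithinAt_image_of_strictMonoOn_of_leftInvOn hI hmono hinv ht
      rw [ContinuousWithinAt, hinv ht] at hcont
      exact hcont.mono_left (nhdsWithin_mono _ sdiff_subset)
    · filter_upwards [self_mem_nhdsWithin]
      rintro _ ⟨⟨u, hu, rfl⟩, hne⟩
      rw [hinv hu]
      exact ⟨hu, fun hut => hne (congrArg h hut)⟩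
  rw [hasDerivWithinAt_iff_tendsto_slope] at hh hv ⊢
  refine ((hv.div hh h'_ne).comp g_tendsto).congr' ?_
  filter_upwards [self_mem_nhdsWithin]
  rintro _ ⟨⟨u, hu, rfl⟩, hne⟩
  have hut : u - t ≠ 0 := sub_ne_zero.2 fun hut => hne (congrArg h hut)
  simp only [Function.comp_apply, Pi.div_apply, hinv hu, slope_def_field, hφ u hu, hφ t ht]
  exact div_div_div_cancel_right₀ hut _ _

theorem isMinOn_of_hasDerivWithinAt {P P' : ℝ → ℝ} {L : Set ℝ} {c : ℝ} (hL : L.OrdConnected)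
    (hc : c ∈ L) (hP : ∀ y ∈ L, HasDerivWithinAt P (P' y) L y)
    (nonpos_left : ∀ y ∈ L, y < c → P' y ≤ 0) (nonneg_right : ∀ y ∈ L, c < y → 0 ≤ P' y) :
    IsMinOn P L c := by
  have hcont : ContinuousOn P L := fun y hy => (hP y hy).continuousWithinAt
  intro m hm
  rcases le_total m c with hmc | hcm
  · have hsub : Icc m c ⊆ L := hL.out hm hc
    refine antitoneOn_of_hasDerivWithinAt_nonpos (convex_Icc m c) (hcont.mono hsub)
      (fun y hy => (hP y (hsub (interior_subset hy))).mono (interior_subset.trans hsub))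
      (fun y hy => nonpos_left y (hsub (interior_subset hy)) ?_)
      (left_mem_Icc.2 hmc) (right_mem_Icc.2 hmc) hmc
    exact (interior_Icc.subset hy).2
  · have hsub : Icc c m ⊆ L := hL.out hc hm
    refine monotoneOn_of_hasDerivWithinAt_nonneg (convex_Icc c m) (hcont.mono hsub)
      (fun y hy => (hP y (hsub (interior_subset hy))).mono (interior_subset.trans hsub))
      (fun y hy => nonneg_right y (hsub (interior_subset hy)) ?_)
      (left_mem_Icc.2 hcm) (right_mem_Icc.2 hcm) hcm
    exact (interior_Icc.subset hy).1

theorem eq_zero_and_eq_zero_of_interpolation_eq_zero {K : Type*} [Field K] {a b x y p q : K}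
    (hab : a ≠ b) (hxy : x ≠ y) (hx : p * (b - x) + q * (x - a) = 0)
    (hy : p * (b - y) + q * (y - a) = 0) : p = 0 ∧ q = 0 := by
  have hqp : q = p := by
    refine sub_eq_zero.1 ((mul_eq_zero.1 (?_ : (q - p) * (x - y) = 0)).resolve_right
      (sub_ne_zero.2 hxy))
    linear_combination hx - hy
  have hp : p = 0 := by
    refine (mul_eq_zero.1 (?_ : p * (b - a) = 0)).resolve_right (sub_ne_zero.2 hab.symm)
    linear_combination hx - (x - a) * hqp
  exact ⟨hp, hqp.trans hp⟩

end Calculus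

section LocalConcavity

variable {Ω : Set (ℝ × ℝ)} {G : ℝ × ℝ → ℝ}

theorem locallyConcaveOn_of_exists_supergradient
    (hG : ∀ z ∈ Ω, ∃ p q : ℝ, ∀ w ∈ Ω, G w ≤ G z + p * (w.1 - z.1) + q * (w.2 - z.2)) :
    LocallyConcaveOn Ω G := by
  intro x y hx hy hxy α β hα hβ hαβ
  obtain ⟨p, q, hpq⟩ := hG _ (hxy ⟨α, β, hα, hβ, hαβ, rfl⟩)
  set z := α • x + β • y
  have hz₁ : z.1 = α * x.1 + β * y.1 := rfl
  have hz₂ : z.2 = α * x.2 + β * y.2 := rfl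
  calc α * G x + β * G y
      ≤ α * (G z + p * (x.1 - z.1) + q * (x.2 - z.2)) +
          β * (G z + p * (y.1 - z.1) + q * (y.2 - z.2)) := by
        gcongr
        exacts [hpq x hx, hpq y hy]
    _ = G z := by
        linear_combination (G z - p * z.1 - q * z.2) * hαβ - p * hz₁ - q * hz₂

theorem LocallyConcaveOn.concaveOn_vertical (hG : LocallyConcaveOn Ω G) {x : ℝ} {S : Set ℝ}
    (hS : Convex ℝ S) (hSΩ : ∀ s ∈ S, (x, s) ∈ Ω) : ConcaveOn ℝ S fun s => G (x, s) := by
  have combo : ∀ {s t α β : ℝ}, α + β = 1 →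
      α • (x, s) + β • (x, t) = (x, α • s + β • t) := fun {s t α β} hαβ => by
    rw [Prod.smul_mk, Prod.smul_mk, Prod.mk_add_mk, Convex.combo_self hαβ]
  refine ⟨hS, fun s hs t ht α β hα hβ hαβ => ?_⟩
  have hseg : segment ℝ (x, s) (x, t) ⊆ Ω := by
    rintro _ ⟨u, v, hu, hv, huv, rfl⟩
    rw [combo huv]
    exact hSΩ _ (hS hs ht hu hv huv)
  simpa only [combo hαβ, smul_eq_mul] using
    hG (x, s) (x, t) (hSΩ s hs) (hSΩ t ht) hseg α β hα hβ hαβ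

end LocalConcavity

/-- The height over `x` of the line through the points `(a, a²)` and `(b, b²)` of the parabola. -/
def chordHeight (a b x : ℝ) : ℝ :=
  (a + b) * x - a * b

/-- The value at `x` of the affine function that agrees with `f` at `a` and `b`. On the chord from
`(a, a²)` to `(b, b²)` it is the interpolant `B`, as a function of the first coordinate. -/
noncomputable def chordValue (f : ℝ → ℝ) (a b x : ℝ) : ℝ :=
  ((f b - f a) * x + b * f a - a * f b) / (b - a)

/-- The value of `∂B/∂x₂` along a chord whose endpoints satisfy the chord equation. -/
noncomputable def verticalSlope (f : ℝ → ℝ) (a b : ℝ) : ℝ :=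
  (deriv f b - deriv f a) / (2 * (b - a))

section Chord

variable {f : ℝ → ℝ}

theorem chordHeight_eq_sq_add (a b x : ℝ) : chordHeight a b x = x ^ 2 + (x - a) * (b - x) := by
  unfold chordHeight
  ring

theorem chordHeight_sub_chordHeight (a b x y : ℝ) :
    chordHeight a b x - chordHeight a b y = (a + b) * (x - y) := by
  unfold chordHeight
  ring

theorem chordValue_sub_chordValue (a b x y : ℝ) :
    chordValue f a b x - chordValue f a b y = (f b - f a) / (b - a) * (x - y) := by
  unfold chordValue
  ring

theorem mem_segment_parabola_iff {a b : ℝ} (hab : a ≤ b) (p : ℝ × ℝ) :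
    p ∈ segment ℝ (a, a ^ 2) (b, b ^ 2) ↔ p.1 ∈ Icc a b ∧ p.2 = chordHeight a b p.1 := by
  have combo : ∀ {u v : ℝ}, u + v = 1 →
      u * a ^ 2 + v * b ^ 2 = chordHeight a b (u * a + v * b) := fun {u v} huv => by
    unfold chordHeight
    linear_combination -(a * b) * huv
  rw [← segment_eq_Icc hab]
  constructor
  · rintro ⟨u, v, hu, hv, huv, rfl⟩
    exact ⟨⟨u, v, hu, hv, huv, rfl⟩, combo huv⟩
  · rintro ⟨⟨u, v, hu, hv, huv, hp₁⟩, hp₂⟩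
    refine ⟨u, v, hu, hv, huv, Prod.ext hp₁ ?_⟩
    rw [hp₂, ← hp₁]
    exact combo huv

theorem chordHeight_lt_chordHeight {a₁ b₁ a₂ b₂ x : ℝ} (ha : a₂ < a₁) (hab : a₁ ≤ b₁)
    (hb : b₁ < b₂) (hx : x ∈ Icc a₂ b₂) : chordHeight a₁ b₁ x < chordHeight a₂ b₂ x := by
  obtain ⟨hax, hxb⟩ := hx
  rw [chordHeight_eq_sq_add, chordHeight_eq_sq_add, add_lt_add_iff_left]
  have outer_nonneg : 0 ≤ (x - a₂) * (b₂ - x) :=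
    mul_nonneg (sub_nonneg.2 hax) (sub_nonneg.2 hxb)
  rcases lt_or_ge x a₁ with hxa₁ | hxa₁
  · exact (mul_neg_of_neg_of_pos (by linarith) (by linarith)).trans_le outer_nonneg
  rcases lt_or_ge b₁ x with hxb₁ | hxb₁
  · exact (mul_neg_of_pos_of_neg (by linarith) (by linarith)).trans_le outer_nonneg
  · exact mul_lt_mul'' (by linarith) (by linarith) (by linarith) (by linarith)

theorem chordEq.two_mul_sub_eq {a b : ℝ} (h : chordEq f a b) :
    2 * (f b - f a) = (b - a) * (deriv f a + deriv f b) := by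
  rcases eq_or_ne a b with rfl | hab
  · ring
  · rw [chordEq, div_eq_div_iff (sub_ne_zero.2 hab.symm) two_ne_zero] at h
    linear_combination h

end Chord

section ChordDerivatives

variable {f a b : ℝ → ℝ} {a' b' t : ℝ} {s : Set ℝ}

theorem hasDerivWithinAt_chordHeight (ha : HasDerivWithinAt a a' s t)
    (hb : HasDerivWithinAt b b' s t) (x : ℝ) :
    HasDerivWithinAt (fun u => chordHeight (a u) (b u) x)
      (b' * (x - a t) - a' * (b t - x)) s t := by
  refine (((ha.add hb).mul_const x).sub (ha.mul hb)).congr_deriv ?_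
  ring

theorem hasDerivWithinAt_chordValue (hfa : DifferentiableAt ℝ f (a t))
    (hfb : DifferentiableAt ℝ f (b t)) (ha : HasDerivWithinAt a a' s t)
    (hb : HasDerivWithinAt b b' s t) (hab : a t ≠ b t) (x : ℝ) :
    HasDerivWithinAt (fun u => chordValue f (a u) (b u) x)
      ((a' * (deriv f (a t) - (f (b t) - f (a t)) / (b t - a t)) * (b t - x) +
        b' * (deriv f (b t) - (f (b t) - f (a t)) / (b t - a t)) * (x - a t)) / (b t - a t))
      s t := by
  have hne : b t - a t ≠ 0 := sub_ne_zero.2 hab.symm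
  have hfa' := hfa.hasDerivAt.comp_hasDerivWithinAt t ha
  have hfb' := hfb.hasDerivAt.comp_hasDerivWithinAt t hb
  refine (((((hfb'.sub hfa').mul_const x).add (hb.mul hfa')).sub (ha.mul hfb')).div
    (hb.sub ha) hne).congr_deriv ?_
  simp only [Pi.sub_apply, Pi.add_apply, Pi.mul_apply, Function.comp_apply]
  field_simp
  ring

theorem hasDerivWithinAt_chordValue_of_chordEq (hfa : DifferentiableAt ℝ f (a t))
    (hfb : DifferentiableAt ℝ f (b t)) (ha : HasDerivWithinAt a a' s t)
    (hb : HasDerivWithinAt b b' s t) (hab : a t ≠ b t) (hc : chordEq f (a t) (b t)) (x : ℝ) :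
    HasDerivWithinAt (fun u => chordValue f (a u) (b u) x)
      (verticalSlope f (a t) (b t) * (b' * (x - a t) - a' * (b t - x))) s t := by
  refine (hasDerivWithinAt_chordValue hfa hfb ha hb hab x).congr_deriv ?_
  rw [show (f (b t) - f (a t)) / (b t - a t) = _ from hc, verticalSlope]
  field_simp
  ring

theorem hasDerivWithinAt_verticalSlope (hfa : DifferentiableAt ℝ (deriv f) (a t))
    (hfb : DifferentiableAt ℝ (deriv f) (b t)) (ha : HasDerivWithinAt a a' s t)
    (hb : HasDerivWithinAt b b' s t) (hab : a t ≠ b t) :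
    HasDerivWithinAt (fun u => verticalSlope f (a u) (b u))
      ((b' * DRdiff f (a t) (b t) - a' * DLdiff f (a t) (b t)) / (2 * (b t - a t))) s t := by
  have hne : b t - a t ≠ 0 := sub_ne_zero.2 hab.symm
  have hfa' := hfa.hasDerivAt.comp_hasDerivWithinAt t ha
  have hfb' := hfb.hasDerivAt.comp_hasDerivWithinAt t hb
  refine ((hfb'.sub hfa').div ((hb.sub ha).const_mul 2)
    (mul_ne_zero two_ne_zero hne)).congr_deriv ?_
  simp only [Pi.sub_apply, Function.comp_apply, DRdiff, DLdiff]
  field_simp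
  ring

theorem mul_DLdiff_add_mul_DRdiff_eq_zero (hf : Differentiable ℝ f)
    (hf' : Differentiable ℝ (deriv f)) (ha : HasDerivWithinAt a a' s t)
    (hb : HasDerivWithinAt b b' s t) (hs : UniqueDiffWithinAt ℝ s t) (ht : t ∈ s)
    (hab : a t ≠ b t) (hc : ∀ u ∈ s, chordEq f (a u) (b u)) :
    a' * DLdiff f (a t) (b t) + b' * DRdiff f (a t) (b t) = 0 := by
  have hne : b t - a t ≠ 0 := sub_ne_zero.2 hab.symm
  have deriv_lhs := (((hf _).hasDerivAt.comp_hasDerivWithinAt t hb).sub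
    ((hf _).hasDerivAt.comp_hasDerivWithinAt t ha)).const_mul 2
  have deriv_rhs := (hb.sub ha).mul (((hf' _).hasDerivAt.comp_hasDerivWithinAt t ha).add
    ((hf' _).hasDerivAt.comp_hasDerivWithinAt t hb))
  have derivs_eq := hs.eq_deriv _ deriv_lhs
    (deriv_rhs.congr_of_mem (fun u hu => (hc u hu).two_mul_sub_eq) ht)
  simp only [Pi.sub_apply, Pi.add_apply, Function.comp_apply] at derivs_eq
  unfold DRdiff DLdiff
  field_simp
  linear_combination -derivs_eq

end ChordDerivatives

/-- A one-parameter family of nested nondegenerate intervals `[a ℓ, b ℓ]`, `ℓ ∈ L`, whose left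
endpoints move strictly to the left and right endpoints strictly to the right; the chords of the
parabola over them foliate `chordDomain a b L`. The functions `a'` and `b'` are the derivatives of
`a` and `b` within the parameter interval `L`; the parameter need not be the length `b ℓ - a ℓ`. -/
structure IsChordFoliation (L : Set ℝ) (a b a' b' : ℝ → ℝ) : Prop where
  ordConnected : L.OrdConnected
  nontrivial : L.Nontrivial
  lt : ∀ ℓ ∈ L, a ℓ < b ℓ
  hasDerivWithinAt_left : ∀ ℓ ∈ L, HasDerivWithinAt a (a' ℓ) L ℓ
  hasDerivWithinAt_right : ∀ ℓ ∈ L, HasDerivWithinAt b (b' ℓ) L ℓ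
  deriv_left_neg : ∀ ℓ ∈ L, a' ℓ < 0
  deriv_right_pos : ∀ ℓ ∈ L, 0 < b' ℓ

/-- `B` is affine on every chord with parameter in `L` and equals `f x₁` at its endpoints. -/
def InterpolatesOnChords (f a b : ℝ → ℝ) (L : Set ℝ) (B : ℝ × ℝ → ℝ) : Prop :=
  ∀ ℓ ∈ L, ∀ x ∈ chordSeg a b ℓ, B x = chordValue f (a ℓ) (b ℓ) x.1

namespace IsChordFoliation

variable {f : ℝ → ℝ} {L : Set ℝ} {a b a' b' : ℝ → ℝ} {B : ℝ × ℝ → ℝ} {ℓ m x : ℝ}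

section Geometry

theorem interior_nonempty (F : IsChordFoliation L a b a' b') : (interior L).Nonempty :=
  F.ordConnected.convex.nontrivial_iff_nonempty_interior.1 F.nontrivial

theorem uniqueDiffOn (F : IsChordFoliation L a b a' b') : UniqueDiffOn ℝ L :=
  uniqueDiffOn_convex F.ordConnected.convex F.interior_nonempty

theorem continuousOn_left (F : IsChordFoliation L a b a' b') : ContinuousOn a L :=
  fun ℓ hℓ => (F.hasDerivWithinAt_left ℓ hℓ).continuousWithinAt

theorem continuousOn_right (F : IsChordFoliation L a b a' b') : ContinuousOn b L :=
  fun ℓ hℓ => (F.hasDerivWithinAt_right ℓ hℓ).continuousWithinAt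

theorem strictAntiOn_left (F : IsChordFoliation L a b a' b') : StrictAntiOn a L :=
  strictAntiOn_of_hasDerivWithinAt_neg F.ordConnected.convex F.continuousOn_left
    (fun ℓ hℓ => (F.hasDerivWithinAt_left ℓ (interior_subset hℓ)).mono interior_subset)
    (fun ℓ hℓ => F.deriv_left_neg ℓ (interior_subset hℓ))

theorem strictMonoOn_right (F : IsChordFoliation L a b a' b') : StrictMonoOn b L :=
  strictMonoOn_of_hasDerivWithinAt_pos F.ordConnected.convex F.continuousOn_right
    (fun ℓ hℓ => (F.hasDerivWithinAt_right ℓ (interior_subset hℓ)).mono interior_subset)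
    (fun ℓ hℓ => F.deriv_right_pos ℓ (interior_subset hℓ))

theorem Icc_subset_Icc (F : IsChordFoliation L a b a' b') (hℓ : ℓ ∈ L) (hm : m ∈ L)
    (hℓm : ℓ ≤ m) : Icc (a ℓ) (b ℓ) ⊆ Icc (a m) (b m) :=
  Set.Icc_subset_Icc (F.strictAntiOn_left.antitoneOn hℓ hm hℓm)
    (F.strictMonoOn_right.monotoneOn hℓ hm hℓm)

theorem chordHeight_lt (F : IsChordFoliation L a b a' b') (hℓ : ℓ ∈ L) (hm : m ∈ L) (hℓm : ℓ < m)
    (hx : x ∈ Icc (a m) (b m)) : chordHeight (a ℓ) (b ℓ) x < chordHeight (a m) (b m) x :=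
  chordHeight_lt_chordHeight (F.strictAntiOn_left hℓ hm hℓm) (F.lt ℓ hℓ).le
    (F.strictMonoOn_right hℓ hm hℓm) hx

theorem chordHeight_deriv_pos (F : IsChordFoliation L a b a' b') (hℓ : ℓ ∈ L)
    (hx : x ∈ Icc (a ℓ) (b ℓ)) : 0 < b' ℓ * (x - a ℓ) - a' ℓ * (b ℓ - x) := by
  have ha := F.deriv_left_neg ℓ hℓ
  have hb := F.deriv_right_pos ℓ hℓ
  rcases hx.1.eq_or_lt with rfl | hax
  · linarith [mul_neg_of_neg_of_pos ha (sub_pos.2 (F.lt ℓ hℓ))]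
  · linarith [mul_pos hb (sub_pos.2 hax),
      mul_nonpos_of_nonpos_of_nonneg ha.le (sub_nonneg.2 hx.2)]

theorem mem_chordSeg_iff (F : IsChordFoliation L a b a' b') (hℓ : ℓ ∈ L) (p : ℝ × ℝ) :
    p ∈ chordSeg a b ℓ ↔ p.1 ∈ Icc (a ℓ) (b ℓ) ∧ p.2 = chordHeight (a ℓ) (b ℓ) p.1 :=
  mem_segment_parabola_iff (F.lt ℓ hℓ).le p

theorem mk_chordHeight_mem_chordSeg (F : IsChordFoliation L a b a' b') (hℓ : ℓ ∈ L)
    (hx : x ∈ Icc (a ℓ) (b ℓ)) : (x, chordHeight (a ℓ) (b ℓ) x) ∈ chordSeg a b ℓ :=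
  (F.mem_chordSeg_iff hℓ _).2 ⟨hx, rfl⟩

theorem verticalSlice_eq_image (F : IsChordFoliation L a b a' b') (x : ℝ) :
    {s | (x, s) ∈ chordDomain a b L} =
      (fun ℓ => chordHeight (a ℓ) (b ℓ) x) '' {ℓ ∈ L | x ∈ Icc (a ℓ) (b ℓ)} := by
  ext s
  constructor
  · rintro ⟨ℓ, hℓ, hs⟩
    obtain ⟨hx, hheight⟩ := (F.mem_chordSeg_iff hℓ _).1 hs
    exact ⟨ℓ, ⟨hℓ, hx⟩, hheight.symm⟩
  · rintro ⟨ℓ, ⟨hℓ, hx⟩, rfl⟩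
    exact ⟨ℓ, hℓ, F.mk_chordHeight_mem_chordSeg hℓ hx⟩

theorem ordConnected_parameters_over (F : IsChordFoliation L a b a' b') (x : ℝ) :
    {ℓ ∈ L | x ∈ Icc (a ℓ) (b ℓ)}.OrdConnected := by
  refine ⟨fun ℓ hℓ m hm k hk => ?_⟩
  have hkL : k ∈ L := F.ordConnected.out hℓ.1 hm.1 hk
  exact ⟨hkL, F.Icc_subset_Icc hℓ.1 hkL hk.1 hℓ.2⟩

theorem ordConnected_verticalSlice (F : IsChordFoliation L a b a' b') (x : ℝ) :
    {s | (x, s) ∈ chordDomain a b L}.OrdConnected := by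
  rw [F.verticalSlice_eq_image]
  refine ((F.ordConnected_parameters_over x).isPreconnected.image _ fun ℓ hℓ => ?_).ordConnected
  exact (hasDerivWithinAt_chordHeight (F.hasDerivWithinAt_left ℓ hℓ.1)
    (F.hasDerivWithinAt_right ℓ hℓ.1) x).continuousWithinAt.mono (sep_subset _ _)

theorem mk_chordHeight_mem_interior (F : IsChordFoliation L a b a' b') (hℓ : ℓ ∈ interior L)
    (hx : x ∈ Ioo (a ℓ) (b ℓ)) :
    (x, chordHeight (a ℓ) (b ℓ) x) ∈ interior (chordDomain a b L) := by
  have hℓL := interior_subset hℓ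
  have hLnhds : L ∈ 𝓝 ℓ := mem_interior_iff_mem_nhds.1 hℓ
  have near : ∀ᶠ k in 𝓝 ℓ, k ∈ L ∧ a k < x ∧ x < b k :=
    (eventually_mem_set.2 hLnhds).and
      (((F.continuousOn_left.continuousAt hLnhds).eventually_lt_const hx.1).and
        ((F.continuousOn_right.continuousAt hLnhds).eventually_const_lt hx.2))
  obtain ⟨k, ⟨hkL, hak, hkb⟩, hkℓ : k < ℓ⟩ :=
    ((near.filter_mono nhdsWithin_le_nhds).and (self_mem_nhdsWithin (s := Iio ℓ))).exists
  obtain ⟨m, hmL, hℓm : ℓ < m⟩ :=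
    ((eventually_mem_set.2 (mem_nhdsWithin_of_mem_nhds hLnhds)).and
      (self_mem_nhdsWithin (s := Ioi ℓ))).exists
  have height_k_lt := F.chordHeight_lt hkL hℓL hkℓ (Ioo_subset_Icc_self hx)
  have height_lt_m := F.chordHeight_lt hℓL hmL hℓm
    (F.Icc_subset_Icc hℓL hmL hℓm.le (Ioo_subset_Icc_self hx))
  have height_continuous (u : ℝ) : Continuous fun p : ℝ × ℝ => chordHeight (a u) (b u) p.1 := by
    unfold chordHeight
    fun_prop
  rw [mem_interior_iff_mem_nhds]
  filter_upwards [continuousAt_fst.eventually_const_lt hak,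
    continuousAt_fst.eventually_lt_const hkb,
    (height_continuous k).continuousAt.eventually_lt continuousAt_snd height_k_lt,
    continuousAt_snd.eventually_lt (height_continuous m).continuousAt height_lt_m]
    with p hap hpb hkp hpm
  have hpk : p.1 ∈ Icc (a k) (b k) := ⟨hap.le, hpb.le⟩
  have hpm' : p.1 ∈ Icc (a m) (b m) := F.Icc_subset_Icc hkL hmL (hkℓ.trans hℓm).le hpk
  exact (F.ordConnected_verticalSlice p.1).out
    ⟨k, hkL, F.mk_chordHeight_mem_chordSeg hkL hpk⟩
    ⟨m, hmL, F.mk_chordHeight_mem_chordSeg hmL hpm'⟩ ⟨hkp.le, hpm.le⟩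

end Geometry

section VerticalDerivative

theorem hasDerivWithinAt_verticalSlice {v' : ℝ} (F : IsChordFoliation L a b a' b')
    (hB : InterpolatesOnChords f a b L B) (hℓ : ℓ ∈ L) (hx : x ∈ Icc (a ℓ) (b ℓ))
    (hv : HasDerivWithinAt (fun u => chordValue f (a u) (b u) x) v' L ℓ) :
    HasDerivWithinAt (fun s => B (x, s)) (v' / (b' ℓ * (x - a ℓ) - a' ℓ * (b ℓ - x)))
      {s | (x, s) ∈ chordDomain a b L} (chordHeight (a ℓ) (b ℓ) x) := by
  rw [F.verticalSlice_eq_image]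
  exact hasDerivWithinAt_image_of_strictMonoOn (F.ordConnected_parameters_over x)
    (fun k hk m hm hkm => F.chordHeight_lt hk.1 hm.1 hkm hm.2) ⟨hℓ, hx⟩
    (fun k hk => hB k hk.1 _ (F.mk_chordHeight_mem_chordSeg hk.1 hk.2))
    ((hasDerivWithinAt_chordHeight (F.hasDerivWithinAt_left ℓ hℓ)
      (F.hasDerivWithinAt_right ℓ hℓ) x).mono (sep_subset _ _))
    (F.chordHeight_deriv_pos hℓ hx).ne' (hv.mono (sep_subset _ _))

theorem hasDerivWithinAt_verticalSlice_of_chordEq (F : IsChordFoliation L a b a' b')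
    (hf : Differentiable ℝ f) (hB : InterpolatesOnChords f a b L B) (hℓ : ℓ ∈ L)
    (hc : chordEq f (a ℓ) (b ℓ)) (hx : x ∈ Icc (a ℓ) (b ℓ)) :
    HasDerivWithinAt (fun s => B (x, s)) (verticalSlope f (a ℓ) (b ℓ))
      {s | (x, s) ∈ chordDomain a b L} (chordHeight (a ℓ) (b ℓ) x) :=
  (F.hasDerivWithinAt_verticalSlice hB hℓ hx
    (hasDerivWithinAt_chordValue_of_chordEq (hf _) (hf _) (F.hasDerivWithinAt_left ℓ hℓ)
      (F.hasDerivWithinAt_right ℓ hℓ) (F.lt ℓ hℓ).ne hc x)).congr_deriv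
    (mul_div_cancel_right₀ _ (F.chordHeight_deriv_pos hℓ hx).ne')

theorem hasDerivAt_vertical_of_chordEq {p : ℝ × ℝ} (F : IsChordFoliation L a b a' b')
    (hf : Differentiable ℝ f) (hB : InterpolatesOnChords f a b L B) (hℓ : ℓ ∈ L)
    (hc : chordEq f (a ℓ) (b ℓ)) (hp : p ∈ interior (chordDomain a b L))
    (hpℓ : p ∈ chordSeg a b ℓ) :
    HasDerivAt (fun s => B (p.1, s)) (verticalSlope f (a ℓ) (b ℓ)) p.2 := by
  obtain ⟨hx, hheight⟩ := (F.mem_chordSeg_iff hℓ p).1 hpℓ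
  refine HasDerivWithinAt.hasDerivAt ?_ (verticalSlice_mem_nhds hp)
  rw [hheight]
  exact F.hasDerivWithinAt_verticalSlice_of_chordEq hf hB hℓ hc hx

theorem deriv_vertical_mul_eq (F : IsChordFoliation L a b a' b') (hf : Differentiable ℝ f)
    (hB : InterpolatesOnChords f a b L B) (hℓ : ℓ ∈ interior L) (hx : x ∈ Ioo (a ℓ) (b ℓ)) :
    deriv (fun s => B (x, s)) (chordHeight (a ℓ) (b ℓ) x) *
        (b' ℓ * (x - a ℓ) - a' ℓ * (b ℓ - x)) =
      (a' ℓ * (deriv f (a ℓ) - (f (b ℓ) - f (a ℓ)) / (b ℓ - a ℓ)) * (b ℓ - x) +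
        b' ℓ * (deriv f (b ℓ) - (f (b ℓ) - f (a ℓ)) / (b ℓ - a ℓ)) * (x - a ℓ)) /
        (b ℓ - a ℓ) := by
  have hℓL := interior_subset hℓ
  have hxIcc := Ioo_subset_Icc_self hx
  have hderiv := (F.hasDerivWithinAt_verticalSlice hB hℓL hxIcc
    (hasDerivWithinAt_chordValue (hf _) (hf _) (F.hasDerivWithinAt_left ℓ hℓL)
      (F.hasDerivWithinAt_right ℓ hℓL) (F.lt ℓ hℓL).ne x)).hasDerivAt
    (verticalSlice_mem_nhds (F.mk_chordHeight_mem_interior hℓ hx))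
  rw [hderiv.deriv, div_mul_cancel₀ _ (F.chordHeight_deriv_pos hℓL hxIcc).ne']

theorem chordEq_of_deriv_vertical_eq {y : ℝ} (F : IsChordFoliation L a b a' b')
    (hf : Differentiable ℝ f) (hB : InterpolatesOnChords f a b L B) (hℓ : ℓ ∈ interior L)
    (hx : x ∈ Ioo (a ℓ) (b ℓ)) (hy : y ∈ Ioo (a ℓ) (b ℓ)) (hxy : x ≠ y)
    (hderiv : deriv (fun s => B (x, s)) (chordHeight (a ℓ) (b ℓ) x) =
      deriv (fun s => B (y, s)) (chordHeight (a ℓ) (b ℓ) y)) :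
    chordEq f (a ℓ) (b ℓ) := by
  have hℓL := interior_subset hℓ
  have hne : b ℓ - a ℓ ≠ 0 := (sub_pos.2 (F.lt ℓ hℓL)).ne'
  have at_x := F.deriv_vertical_mul_eq hf hB hℓ hx
  have at_y := F.deriv_vertical_mul_eq hf hB hℓ hy
  rw [← hderiv] at at_y
  rw [eq_div_iff hne] at at_x at_y
  set d := deriv (fun s => B (x, s)) (chordHeight (a ℓ) (b ℓ) x)
  set μ := (f (b ℓ) - f (a ℓ)) / (b ℓ - a ℓ) with hμ
  obtain ⟨left_zero, right_zero⟩ := eq_zero_and_eq_zero_of_interpolation_eq_zero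
    (p := a' ℓ * (d * (b ℓ - a ℓ) + (deriv f (a ℓ) - μ)))
    (q := b' ℓ * (deriv f (b ℓ) - μ - d * (b ℓ - a ℓ))) (F.lt ℓ hℓL).ne hxy
    (by linear_combination -at_x) (by linear_combination -at_y)
  have left_eq := (mul_eq_zero.1 left_zero).resolve_left (F.deriv_left_neg ℓ hℓL).ne
  have right_eq := (mul_eq_zero.1 right_zero).resolve_left (F.deriv_right_pos ℓ hℓL).ne'
  rw [chordEq, ← hμ]
  linear_combination -(left_eq + right_eq) / 2

theorem chordEq_of_chordEq_on_interior (F : IsChordFoliation L a b a' b')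
    (hf : Continuous f) (hf' : Continuous (deriv f))
    (hc : ∀ ℓ ∈ interior L, chordEq f (a ℓ) (b ℓ)) : ∀ ℓ ∈ L, chordEq f (a ℓ) (b ℓ) := by
  have ha := F.continuousOn_left
  have hb := F.continuousOn_right
  have hconv : Convex ℝ L := F.ordConnected.convex
  refine EqOn.of_subset_closure (s := interior L) hc ?_ ?_ interior_subset ?_
  · exact ((hf.comp_continuousOn hb).sub (hf.comp_continuousOn ha)).div (hb.sub ha)
      fun ℓ hℓ => (sub_pos.2 (F.lt ℓ hℓ)).ne'
  · exact ((hf'.comp_continuousOn ha).add (hf'.comp_continuousOn hb)).div_const 2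
  · rw [hconv.closure_interior_eq_closure_of_nonempty_interior F.interior_nonempty]
    exact subset_closure

theorem chordEq_of_deriv_vertical_const (F : IsChordFoliation L a b a' b')
    (hf : Differentiable ℝ f) (hf' : Continuous (deriv f)) (hB : InterpolatesOnChords f a b L B)
    (hconst : ∀ ℓ ∈ L, ∀ x ∈ interior (chordDomain a b L), ∀ y ∈ interior (chordDomain a b L),
      x ∈ chordSeg a b ℓ → y ∈ chordSeg a b ℓ →
      deriv (fun s => B (x.1, s)) x.2 = deriv (fun s => B (y.1, s)) y.2) :
    ∀ ℓ ∈ L, chordEq f (a ℓ) (b ℓ) := by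
  refine F.chordEq_of_chordEq_on_interior hf.continuous hf' fun ℓ hℓ => ?_
  have hℓL := interior_subset hℓ
  obtain ⟨x, hax, hxb⟩ := exists_between (F.lt ℓ hℓL)
  obtain ⟨y, hxy, hyb⟩ := exists_between hxb
  have hx : x ∈ Ioo (a ℓ) (b ℓ) := ⟨hax, hxb⟩
  have hy : y ∈ Ioo (a ℓ) (b ℓ) := ⟨hax.trans hxy, hyb⟩
  exact F.chordEq_of_deriv_vertical_eq hf hB hℓ hx hy hxy.ne
    (hconst ℓ hℓL _ (F.mk_chordHeight_mem_interior hℓ hx) _ (F.mk_chordHeight_mem_interior hℓ hy)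
      (F.mk_chordHeight_mem_chordSeg hℓL (Ioo_subset_Icc_self hx))
      (F.mk_chordHeight_mem_chordSeg hℓL (Ioo_subset_Icc_self hy)))

end VerticalDerivative

section Concavity

theorem exists_pos_DRdiff_eq_mul_DLdiff (F : IsChordFoliation L a b a' b')
    (hf : Differentiable ℝ f) (hf' : Differentiable ℝ (deriv f))
    (hc : ∀ ℓ ∈ L, chordEq f (a ℓ) (b ℓ)) (hℓ : ℓ ∈ L) :
    ∃ c > 0, DRdiff f (a ℓ) (b ℓ) = c * DLdiff f (a ℓ) (b ℓ) := by
  have hb := F.deriv_right_pos ℓ hℓ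
  refine ⟨-a' ℓ / b' ℓ, div_pos (neg_pos.2 (F.deriv_left_neg ℓ hℓ)) hb, ?_⟩
  have hrel := mul_DLdiff_add_mul_DRdiff_eq_zero hf hf' (F.hasDerivWithinAt_left ℓ hℓ)
    (F.hasDerivWithinAt_right ℓ hℓ) (F.uniqueDiffOn ℓ hℓ) hℓ (F.lt ℓ hℓ).ne hc
  field_simp
  linear_combination hrel

theorem DLdiff_nonpos_iff_DRdiff_nonpos (F : IsChordFoliation L a b a' b')
    (hf : Differentiable ℝ f) (hf' : Differentiable ℝ (deriv f))
    (hc : ∀ ℓ ∈ L, chordEq f (a ℓ) (b ℓ)) (hℓ : ℓ ∈ L) :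
    DLdiff f (a ℓ) (b ℓ) ≤ 0 ↔ DRdiff f (a ℓ) (b ℓ) ≤ 0 := by
  obtain ⟨c, hcpos, hDR⟩ := F.exists_pos_DRdiff_eq_mul_DLdiff hf hf' hc hℓ
  rw [hDR]
  exact ⟨mul_nonpos_of_nonneg_of_nonpos hcpos.le, fun h => nonpos_of_mul_nonpos_right h hcpos⟩

theorem DLdiff_nonneg_iff_DRdiff_nonneg (F : IsChordFoliation L a b a' b')
    (hf : Differentiable ℝ f) (hf' : Differentiable ℝ (deriv f))
    (hc : ∀ ℓ ∈ L, chordEq f (a ℓ) (b ℓ)) (hℓ : ℓ ∈ L) :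
    0 ≤ DLdiff f (a ℓ) (b ℓ) ↔ 0 ≤ DRdiff f (a ℓ) (b ℓ) := by
  obtain ⟨c, hcpos, hDR⟩ := F.exists_pos_DRdiff_eq_mul_DLdiff hf hf' hc hℓ
  rw [hDR, mul_nonneg_iff_of_pos_left hcpos]

theorem hasDerivWithinAt_verticalSlope_of_chordEq (F : IsChordFoliation L a b a' b')
    (hf : Differentiable ℝ f) (hf' : Differentiable ℝ (deriv f))
    (hc : ∀ ℓ ∈ L, chordEq f (a ℓ) (b ℓ)) (hℓ : ℓ ∈ L) :
    HasDerivWithinAt (fun u => verticalSlope f (a u) (b u))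
      (-a' ℓ / (b ℓ - a ℓ) * DLdiff f (a ℓ) (b ℓ)) L ℓ := by
  have ha := F.hasDerivWithinAt_left ℓ hℓ
  have hb := F.hasDerivWithinAt_right ℓ hℓ
  have hne : b ℓ - a ℓ ≠ 0 := (sub_pos.2 (F.lt ℓ hℓ)).ne'
  refine (hasDerivWithinAt_verticalSlope (hf' _) (hf' _) ha hb (F.lt ℓ hℓ).ne).congr_deriv ?_
  have hrel := mul_DLdiff_add_mul_DRdiff_eq_zero hf hf' ha hb (F.uniqueDiffOn ℓ hℓ) hℓ
    (F.lt ℓ hℓ).ne hc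
  field_simp
  linear_combination hrel

theorem neg_deriv_left_div_pos (F : IsChordFoliation L a b a' b') (hℓ : ℓ ∈ L) :
    0 < -a' ℓ / (b ℓ - a ℓ) :=
  div_pos (neg_pos.2 (F.deriv_left_neg ℓ hℓ)) (sub_pos.2 (F.lt ℓ hℓ))

theorem antitoneOn_verticalSlope_of_locallyConcaveOn (F : IsChordFoliation L a b a' b')
    (hf : Differentiable ℝ f) (hB : InterpolatesOnChords f a b L B)
    (hc : ∀ ℓ ∈ L, chordEq f (a ℓ) (b ℓ)) (hconc : LocallyConcaveOn (chordDomain a b L) B) :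
    AntitoneOn (fun ℓ => verticalSlope f (a ℓ) (b ℓ)) L := by
  refine antitoneOn_iff_forall_lt.2 fun ℓ hℓ m hm hℓm => ?_
  have hxℓ : a ℓ ∈ Icc (a ℓ) (b ℓ) := left_mem_Icc.2 (F.lt ℓ hℓ).le
  have hxm : a ℓ ∈ Icc (a m) (b m) := F.Icc_subset_Icc hℓ hm hℓm.le hxℓ
  have hslice : ConcaveOn ℝ {s | (a ℓ, s) ∈ chordDomain a b L} fun s => B (a ℓ, s) :=
    hconc.concaveOn_vertical (F.ordConnected_verticalSlice (a ℓ)).convex fun _ hs => hs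
  have hsℓ : (a ℓ, chordHeight (a ℓ) (b ℓ) (a ℓ)) ∈ chordDomain a b L :=
    ⟨ℓ, hℓ, F.mk_chordHeight_mem_chordSeg hℓ hxℓ⟩
  have hsm : (a ℓ, chordHeight (a m) (b m) (a ℓ)) ∈ chordDomain a b L :=
    ⟨m, hm, F.mk_chordHeight_mem_chordSeg hm hxm⟩
  have height_lt := F.chordHeight_lt hℓ hm hℓm hxm
  exact (hslice.le_slope_of_hasDerivWithinAt hsℓ hsm height_lt
      (F.hasDerivWithinAt_verticalSlice_of_chordEq hf hB hm (hc m hm) hxm)).trans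
    (hslice.slope_le_of_hasDerivWithinAt hsℓ hsm height_lt
      (F.hasDerivWithinAt_verticalSlice_of_chordEq hf hB hℓ (hc ℓ hℓ) hxℓ))

theorem DLdiff_nonpos_of_locallyConcaveOn (F : IsChordFoliation L a b a' b')
    (hf : Differentiable ℝ f) (hf' : Differentiable ℝ (deriv f))
    (hB : InterpolatesOnChords f a b L B) (hc : ∀ ℓ ∈ L, chordEq f (a ℓ) (b ℓ))
    (hconc : LocallyConcaveOn (chordDomain a b L) B) (hℓ : ℓ ∈ L) :
    DLdiff f (a ℓ) (b ℓ) ≤ 0 := by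
  have slope_deriv_nonpos :=
    (F.antitoneOn_verticalSlope_of_locallyConcaveOn hf hB hc hconc).derivWithin_nonpos (x := ℓ)
  rw [(F.hasDerivWithinAt_verticalSlope_of_chordEq hf hf' hc hℓ).derivWithin
    (F.uniqueDiffOn ℓ hℓ)] at slope_deriv_nonpos
  exact nonpos_of_mul_nonpos_right slope_deriv_nonpos (F.neg_deriv_left_div_pos hℓ)

theorem chordValue_le_tangentPlane (F : IsChordFoliation L a b a' b')
    (hf : Differentiable ℝ f) (hf' : Differentiable ℝ (deriv f))
    (hc : ∀ ℓ ∈ L, chordEq f (a ℓ) (b ℓ)) (hD : ∀ ℓ ∈ L, DLdiff f (a ℓ) (b ℓ) ≤ 0)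
    (hℓ : ℓ ∈ L) (hm : m ∈ L) (hx : x ∈ Icc (a ℓ) (b ℓ)) :
    chordValue f (a ℓ) (b ℓ) x ≤ chordValue f (a m) (b m) x + verticalSlope f (a m) (b m) *
      (chordHeight (a ℓ) (b ℓ) x - chordHeight (a m) (b m) x) := by
  set s := chordHeight (a ℓ) (b ℓ) x
  let plane : ℝ → ℝ := fun k => chordValue f (a k) (b k) x +
    verticalSlope f (a k) (b k) * (s - chordHeight (a k) (b k) x)
  let slope' : ℝ → ℝ := fun k => -a' k / (b k - a k) * DLdiff f (a k) (b k)
  have slope'_nonpos : ∀ k ∈ L, slope' k ≤ 0 := fun k hk =>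
    mul_nonpos_of_nonneg_of_nonpos (F.neg_deriv_left_div_pos hk).le (hD k hk)
  have plane_deriv : ∀ k ∈ L,
      HasDerivWithinAt plane (slope' k * (s - chordHeight (a k) (b k) x)) L k := by
    intro k hk
    have ha := F.hasDerivWithinAt_left k hk
    have hb := F.hasDerivWithinAt_right k hk
    refine ((hasDerivWithinAt_chordValue_of_chordEq (hf _) (hf _) ha hb (F.lt k hk).ne
      (hc k hk) x).add ((F.hasDerivWithinAt_verticalSlope_of_chordEq hf hf' hc hk).mul
      ((hasDerivWithinAt_chordHeight ha hb x).const_sub s))).congr_deriv ?_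
    ring
  have plane_min : IsMinOn plane L ℓ := by
    refine isMinOn_of_hasDerivWithinAt F.ordConnected hℓ plane_deriv ?_ ?_
    · exact fun k hk hkℓ => mul_nonpos_of_nonpos_of_nonneg (slope'_nonpos k hk)
        (sub_nonneg.2 (F.chordHeight_lt hk hℓ hkℓ hx).le)
    · exact fun k hk hℓk => mul_nonneg_of_nonpos_of_nonpos (slope'_nonpos k hk)
        (sub_nonpos.2 (F.chordHeight_lt hℓ hk hℓk (F.Icc_subset_Icc hℓ hk hℓk.le hx)).le)
  calc chordValue f (a ℓ) (b ℓ) x = plane ℓ := by simp only [plane, s, sub_self, mul_zero, add_zero]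
    _ ≤ plane m := plane_min hm

theorem locallyConcaveOn_of_DLdiff_nonpos (F : IsChordFoliation L a b a' b')
    (hf : Differentiable ℝ f) (hf' : Differentiable ℝ (deriv f))
    (hB : InterpolatesOnChords f a b L B) (hc : ∀ ℓ ∈ L, chordEq f (a ℓ) (b ℓ))
    (hD : ∀ ℓ ∈ L, DLdiff f (a ℓ) (b ℓ) ≤ 0) : LocallyConcaveOn (chordDomain a b L) B := by
  refine locallyConcaveOn_of_exists_supergradient ?_
  rintro z ⟨m, hm, hz⟩
  set q := verticalSlope f (a m) (b m) with hq
  refine ⟨(f (b m) - f (a m)) / (b m - a m) - q * (a m + b m), q, ?_⟩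
  rintro w ⟨ℓ, hℓ, hw⟩
  obtain ⟨-, hz₂⟩ := (F.mem_chordSeg_iff hm z).1 hz
  obtain ⟨hw₁, hw₂⟩ := (F.mem_chordSeg_iff hℓ w).1 hw
  rw [hB ℓ hℓ w hw, hB m hm z hz, hz₂]
  have below_plane := F.chordValue_le_tangentPlane hf hf' hc hD hℓ hm hw₁
  rw [← hw₂, ← hq] at below_plane
  refine below_plane.trans_eq ?_
  linear_combination chordValue_sub_chordValue (f := f) (a m) (b m) w.1 z.1 -
    q * chordHeight_sub_chordHeight (a m) (b m) w.1 z.1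

end Concavity

end IsChordFoliation

theorem stmt15_general {f : ℝ → ℝ} (hf : Differentiable ℝ f) (hf' : Differentiable ℝ (deriv f))
    {L : Set ℝ} {a b a' b' : ℝ → ℝ} (F : IsChordFoliation L a b a' b') {B : ℝ × ℝ → ℝ}
    (hB : InterpolatesOnChords f a b L B) :
    (((∀ x ∈ interior (chordDomain a b L),
          DifferentiableAt ℝ (fun y => B (x.1, y)) x.2) ∧
        (∀ ℓ ∈ L, ∀ x ∈ interior (chordDomain a b L),
          ∀ y ∈ interior (chordDomain a b L),
          x ∈ chordSeg a b ℓ → y ∈ chordSeg a b ℓ →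
          deriv (fun s => B (x.1, s)) x.2 = deriv (fun s => B (y.1, s)) y.2)) ↔
      ∀ ℓ ∈ L, chordEq f (a ℓ) (b ℓ)) ∧
    ((∀ ℓ ∈ L, chordEq f (a ℓ) (b ℓ)) →
      (∀ ℓ ∈ L, ∀ x ∈ interior (chordDomain a b L), x ∈ chordSeg a b ℓ →
        deriv (fun s => B (x.1, s)) x.2 =
          (deriv f (b ℓ) - deriv f (a ℓ)) / (2 * (b ℓ - a ℓ))) ∧
      (∀ ℓ ∈ L,
        (DLdiff f (a ℓ) (b ℓ) ≤ 0 ∧ DRdiff f (a ℓ) (b ℓ) ≤ 0) ∨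
        (0 ≤ DLdiff f (a ℓ) (b ℓ) ∧ 0 ≤ DRdiff f (a ℓ) (b ℓ))) ∧
      (LocallyConcaveOn (chordDomain a b L) B ↔
        ∀ ℓ ∈ L, DLdiff f (a ℓ) (b ℓ) ≤ 0) ∧
      ((∀ ℓ ∈ L, DLdiff f (a ℓ) (b ℓ) ≤ 0) ↔
        ∀ ℓ ∈ L, DRdiff f (a ℓ) (b ℓ) ≤ 0)) := by
  have hderiv (hc : ∀ ℓ ∈ L, chordEq f (a ℓ) (b ℓ)) (ℓ : ℝ) (hℓ : ℓ ∈ L) (x : ℝ × ℝ)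
      (hx : x ∈ interior (chordDomain a b L)) (hxℓ : x ∈ chordSeg a b ℓ) :
      HasDerivAt (fun s => B (x.1, s)) (verticalSlope f (a ℓ) (b ℓ)) x.2 :=
    F.hasDerivAt_vertical_of_chordEq hf hB hℓ (hc ℓ hℓ) hx hxℓ
  refine ⟨⟨fun h => F.chordEq_of_deriv_vertical_const hf hf'.continuous hB h.2,
    fun hc => ⟨fun x hx => ?_, fun ℓ hℓ x hx y hy hxℓ hyℓ => ?_⟩⟩, fun hc => ⟨?_, ?_, ⟨?_, ?_⟩, ?_⟩⟩
  · obtain ⟨ℓ, hℓ, hxℓ⟩ := interior_subset hx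
    exact (hderiv hc ℓ hℓ x hx hxℓ).differentiableAt
  · rw [(hderiv hc ℓ hℓ x hx hxℓ).deriv, (hderiv hc ℓ hℓ y hy hyℓ).deriv]
  · exact fun ℓ hℓ x hx hxℓ => (hderiv hc ℓ hℓ x hx hxℓ).deriv
  · exact fun ℓ hℓ => (le_total (DLdiff f (a ℓ) (b ℓ)) 0).imp
      (fun hD => ⟨hD, (F.DLdiff_nonpos_iff_DRdiff_nonpos hf hf' hc hℓ).1 hD⟩)
      (fun hD => ⟨hD, (F.DLdiff_nonneg_iff_DRdiff_nonneg hf hf' hc hℓ).1 hD⟩)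
  · exact fun hconc ℓ hℓ => F.DLdiff_nonpos_of_locallyConcaveOn hf hf' hB hc hconc hℓ
  · exact F.locallyConcaveOn_of_DLdiff_nonpos hf hf' hB hc
  · exact forall₂_congr fun ℓ hℓ => F.DLdiff_nonpos_iff_DRdiff_nonpos hf hf' hc hℓ

theorem stmt15 (ε : ℝ) (hε : 0 < ε) (f : ℝ → ℝ) (hf : ContDiff ℝ 2 f)
    (L : Set ℝ) (hL : L ⊆ Ioc 0 (2 * ε)) (hLord : OrdConnected L)
    (hLnontriv : ∃ ℓ₁ ∈ L, ∃ ℓ₂ ∈ L, ℓ₁ < ℓ₂)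
    (a b a' b' : ℝ → ℝ)
    (hab : ∀ ℓ ∈ L, b ℓ - a ℓ = ℓ)
    (ha' : ∀ ℓ ∈ L, HasDerivWithinAt a (a' ℓ) L ℓ ∧ a' ℓ < 0)
    (hb' : ∀ ℓ ∈ L, HasDerivWithinAt b (b' ℓ) L ℓ ∧ 0 < b' ℓ)
    (B : ℝ × ℝ → ℝ)
    (hB : ∀ ℓ ∈ L, ∀ x ∈ chordSeg a b ℓ,
      B x = ((f (b ℓ) - f (a ℓ)) * x.1 + b ℓ * f (a ℓ) - a ℓ * f (b ℓ)) /
        (b ℓ - a ℓ)) :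
    (((∀ x ∈ interior (chordDomain a b L),
          DifferentiableAt ℝ (fun y => B (x.1, y)) x.2) ∧
        (∀ ℓ ∈ L, ∀ x ∈ interior (chordDomain a b L),
          ∀ y ∈ interior (chordDomain a b L),
          x ∈ chordSeg a b ℓ → y ∈ chordSeg a b ℓ →
          deriv (fun s => B (x.1, s)) x.2 = deriv (fun s => B (y.1, s)) y.2)) ↔
      ∀ ℓ ∈ L, chordEq f (a ℓ) (b ℓ)) ∧
    ((∀ ℓ ∈ L, chordEq f (a ℓ) (b ℓ)) →
      (∀ ℓ ∈ L, ∀ x ∈ interior (chordDomain a b L), x ∈ chordSeg a b ℓ →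
        deriv (fun s => B (x.1, s)) x.2 =
          (deriv f (b ℓ) - deriv f (a ℓ)) / (2 * (b ℓ - a ℓ))) ∧
      (∀ ℓ ∈ L,
        (DLdiff f (a ℓ) (b ℓ) ≤ 0 ∧ DRdiff f (a ℓ) (b ℓ) ≤ 0) ∨
        (0 ≤ DLdiff f (a ℓ) (b ℓ) ∧ 0 ≤ DRdiff f (a ℓ) (b ℓ))) ∧
      (LocallyConcaveOn (chordDomain a b L) B ↔
        ∀ ℓ ∈ L, DLdiff f (a ℓ) (b ℓ) ≤ 0) ∧
      ((∀ ℓ ∈ L, DLdiff f (a ℓ) (b ℓ) ≤ 0) ↔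
        ∀ ℓ ∈ L, DRdiff f (a ℓ) (b ℓ) ≤ 0)) := by
  exact stmt15_general (hf.differentiable two_ne_zero)
    ((contDiff_succ_iff_deriv (n := 1)).1 hf |>.2.2.differentiable one_ne_zero)
    { ordConnected := hLord
      nontrivial := let ⟨ℓ₁, h₁, ℓ₂, h₂, hlt⟩ := hLnontriv; ⟨ℓ₁, h₁, ℓ₂, h₂, hlt.ne⟩
      lt := fun ℓ hℓ => sub_pos.1 ((hab ℓ hℓ).symm ▸ (hL hℓ).1)
      hasDerivWithinAt_left := fun ℓ hℓ => (ha' ℓ hℓ).1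
      hasDerivWithinAt_right := fun ℓ hℓ => (hb' ℓ hℓ).1
      deriv_left_neg := fun ℓ hℓ => (ha' ℓ hℓ).2
      deriv_right_pos := fun ℓ hℓ => (hb' ℓ hℓ).2 } hB
end

section
/- Let f be three times continuously differentiable on an open interval U ⊆ ℝ. Let L be a nondegenerate interval and let a, b : L → ℝ be differentiable with values in U, a(ℓ) < b(ℓ) and b(ℓ) − a(ℓ) = ℓ for all ℓ ∈ L, and suppose each pair (a(ℓ), b(ℓ)) satisfies the chord equation. Then for every ℓ ∈ L: (i) D_R(a(ℓ),b(ℓ))·b'(ℓ) + D_L(a(ℓ),b(ℓ))·a'(ℓ) = 0; (ii) ℓ ↦ D_L(a(ℓ),b(ℓ)) is differentiable with derivative (f'''(a(ℓ)) + 2·D_L(a(ℓ),b(ℓ))/(b(ℓ) − a(ℓ)))·a'(ℓ); (iii) ℓ ↦ D_R(a(ℓ),b(ℓ)) is differentiable with derivative (f'''(b(ℓ)) − 2·D_R(a(ℓ),b(ℓ))/(b(ℓ) − a(ℓ)))·b'(ℓ). -/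
open Set

/-!
Clearing denominators, the chord equation says `2 (f b - f a) = (b - a) (f' a + f' b)`.
Differentiating this along the curve and dividing by `b - a` gives `D_R b' + D_L a' = 0`.
For every curve, the mean `⟨f''⟩` has derivative `(D_R b' - D_L a') / (b - a)`, which the relation
just obtained turns into `-2 D_L a' / (b - a)`; this is the formula for the derivative of `D_L`.
Since `D_R(a, b) = D_L(b, a)` and the chord equation is symmetric, the formula for `D_R` is the one
for `D_L` with the endpoints exchanged.
-/

theorem differentiableOn_iterate_deriv {𝕜 E : Type*} [NontriviallyNormedField 𝕜]
    [NormedAddCommGroup E] [NormedSpace 𝕜 E] {g : 𝕜 → E} {U : Set 𝕜} {n : WithTop ℕ∞} {k : ℕ}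
    (hU : IsOpen U) (hg : ContDiffOn 𝕜 n g U) (hk : k < n) :
    DifferentiableOn 𝕜 (deriv^[k] g) U := by
  rw [← iteratedDeriv_eq_iterate]
  exact (hg.differentiableOn_iteratedDerivWithin hk hU.uniqueDiffOn).congr
    (iteratedDerivWithin_of_isOpen hU).symm

theorem uniqueDiffOn_of_ordConnected {L : Set ℝ} (hL : OrdConnected L) (hL' : L.Nontrivial) :
    UniqueDiffOn ℝ L :=
  uniqueDiffOn_convex hL.convex (hL.convex.nontrivial_iff_nonempty_interior.1 hL')

theorem hasDerivWithinAt_sub_div_sub {𝕜 : Type*} [NontriviallyNormedField 𝕜]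
    {g a b : 𝕜 → 𝕜} {L : Set 𝕜} {ℓ a' b' ga' gb' : 𝕜} (hne : a ℓ ≠ b ℓ)
    (hga : HasDerivAt g ga' (a ℓ)) (hgb : HasDerivAt g gb' (b ℓ))
    (ha : HasDerivWithinAt a a' L ℓ) (hb : HasDerivWithinAt b b' L ℓ) :
    HasDerivWithinAt (fun s => (g (b s) - g (a s)) / (b s - a s))
      (((gb' - (g (b ℓ) - g (a ℓ)) / (b ℓ - a ℓ)) * b' -
        (ga' - (g (b ℓ) - g (a ℓ)) / (b ℓ - a ℓ)) * a') / (b ℓ - a ℓ)) L ℓ := by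
  have hsub : b ℓ - a ℓ ≠ 0 := sub_ne_zero.2 hne.symm
  refine (((hgb.comp_hasDerivWithinAt ℓ hb).sub (hga.comp_hasDerivWithinAt ℓ ha)).fun_div
    (hb.fun_sub ha) hsub).congr_deriv ?_
  simp only [Pi.sub_apply, Function.comp_apply]
  field_simp
  ring

section Endpoints

variable {f : ℝ → ℝ} {x y : ℝ}

theorem DLdiff_swap : DLdiff f y x = DRdiff f x y := by
  rw [DLdiff, DRdiff, ← neg_sub (deriv f y), ← neg_sub y, neg_div_neg_eq]

theorem chordEq_symm (h : chordEq f x y) : chordEq f y x := by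
  rw [chordEq, ← neg_sub (f y), ← neg_sub y, neg_div_neg_eq, add_comm]
  exact h

theorem chordEq_iff_two_mul_sub_eq (hxy : x ≠ y) :
    chordEq f x y ↔ 2 * (f y - f x) = (y - x) * (deriv f x + deriv f y) := by
  rw [chordEq, div_eq_div_iff (sub_ne_zero.2 hxy.symm) two_ne_zero, mul_comm 2, mul_comm (y - x)]

end Endpoints

section Curve

variable {f a b : ℝ → ℝ} {L : Set ℝ} {ℓ a' b' : ℝ}

theorem hasDerivWithinAt_DLdiff (hne : a ℓ ≠ b ℓ)
    (hf'a : DifferentiableAt ℝ (deriv f) (a ℓ)) (hf'b : DifferentiableAt ℝ (deriv f) (b ℓ))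
    (hf''a : DifferentiableAt ℝ (deriv (deriv f)) (a ℓ))
    (ha : HasDerivWithinAt a a' L ℓ) (hb : HasDerivWithinAt b b' L ℓ) :
    HasDerivWithinAt (fun s => DLdiff f (a s) (b s))
      (deriv (deriv (deriv f)) (a ℓ) * a' -
        (DRdiff f (a ℓ) (b ℓ) * b' - DLdiff f (a ℓ) (b ℓ) * a') / (b ℓ - a ℓ)) L ℓ :=
  (hf''a.hasDerivAt.comp_hasDerivWithinAt ℓ ha).sub
    (hasDerivWithinAt_sub_div_sub hne hf'a.hasDerivAt hf'b.hasDerivAt ha hb)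

theorem DRdiff_mul_add_DLdiff_mul_eq_zero (hL : UniqueDiffWithinAt ℝ L ℓ) (hℓ : ℓ ∈ L)
    (hne : ∀ s ∈ L, a s ≠ b s) (hchord : ∀ s ∈ L, chordEq f (a s) (b s))
    (hfa : DifferentiableAt ℝ f (a ℓ)) (hfb : DifferentiableAt ℝ f (b ℓ))
    (hf'a : DifferentiableAt ℝ (deriv f) (a ℓ)) (hf'b : DifferentiableAt ℝ (deriv f) (b ℓ))
    (ha : HasDerivWithinAt a a' L ℓ) (hb : HasDerivWithinAt b b' L ℓ) :
    DRdiff f (a ℓ) (b ℓ) * b' + DLdiff f (a ℓ) (b ℓ) * a' = 0 := by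
  have deriv_lhs : HasDerivWithinAt (fun s => 2 * (f (b s) - f (a s)))
      (2 * (deriv f (b ℓ) * b' - deriv f (a ℓ) * a')) L ℓ :=
    ((hfb.hasDerivAt.comp_hasDerivWithinAt ℓ hb).sub
      (hfa.hasDerivAt.comp_hasDerivWithinAt ℓ ha)).const_mul 2
  have deriv_rhs : HasDerivWithinAt (fun s => (b s - a s) * (deriv f (a s) + deriv f (b s)))
      ((b' - a') * (deriv f (a ℓ) + deriv f (b ℓ)) +
        (b ℓ - a ℓ) * (deriv (deriv f) (a ℓ) * a' + deriv (deriv f) (b ℓ) * b')) L ℓ :=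
    (hb.sub ha).mul ((hf'a.hasDerivAt.comp_hasDerivWithinAt ℓ ha).add
      (hf'b.hasDerivAt.comp_hasDerivWithinAt ℓ hb))
  have derivs_eq := hL.eq_deriv _ deriv_lhs <| deriv_rhs.congr_of_mem
    (fun s hs => (chordEq_iff_two_mul_sub_eq (hne s hs)).1 (hchord s hs)) hℓ
  have hsub : b ℓ - a ℓ ≠ 0 := sub_ne_zero.2 (hne ℓ hℓ).symm
  rw [DRdiff, DLdiff]
  field_simp
  linarith

theorem hasDerivWithinAt_DLdiff_of_chordEq (hL : UniqueDiffWithinAt ℝ L ℓ) (hℓ : ℓ ∈ L)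
    (hne : ∀ s ∈ L, a s ≠ b s) (hchord : ∀ s ∈ L, chordEq f (a s) (b s))
    (hfa : DifferentiableAt ℝ f (a ℓ)) (hfb : DifferentiableAt ℝ f (b ℓ))
    (hf'a : DifferentiableAt ℝ (deriv f) (a ℓ)) (hf'b : DifferentiableAt ℝ (deriv f) (b ℓ))
    (hf''a : DifferentiableAt ℝ (deriv (deriv f)) (a ℓ))
    (ha : HasDerivWithinAt a a' L ℓ) (hb : HasDerivWithinAt b b' L ℓ) :
    HasDerivWithinAt (fun s => DLdiff f (a s) (b s))
      ((deriv (deriv (deriv f)) (a ℓ) + 2 * DLdiff f (a ℓ) (b ℓ) / (b ℓ - a ℓ)) * a') L ℓ := by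
  refine (hasDerivWithinAt_DLdiff (hne ℓ hℓ) hf'a hf'b hf''a ha hb).congr_deriv ?_
  rw [eq_neg_of_add_eq_zero_left
    (DRdiff_mul_add_DLdiff_mul_eq_zero hL hℓ hne hchord hfa hfb hf'a hf'b ha hb)]
  ring

theorem hasDerivWithinAt_DRdiff_of_chordEq (hL : UniqueDiffWithinAt ℝ L ℓ) (hℓ : ℓ ∈ L)
    (hne : ∀ s ∈ L, a s ≠ b s) (hchord : ∀ s ∈ L, chordEq f (a s) (b s))
    (hfa : DifferentiableAt ℝ f (a ℓ)) (hfb : DifferentiableAt ℝ f (b ℓ))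
    (hf'a : DifferentiableAt ℝ (deriv f) (a ℓ)) (hf'b : DifferentiableAt ℝ (deriv f) (b ℓ))
    (hf''b : DifferentiableAt ℝ (deriv (deriv f)) (b ℓ))
    (ha : HasDerivWithinAt a a' L ℓ) (hb : HasDerivWithinAt b b' L ℓ) :
    HasDerivWithinAt (fun s => DRdiff f (a s) (b s))
      ((deriv (deriv (deriv f)) (b ℓ) - 2 * DRdiff f (a ℓ) (b ℓ) / (b ℓ - a ℓ)) * b') L ℓ := by
  have h := hasDerivWithinAt_DLdiff_of_chordEq hL hℓ (fun s hs => (hne s hs).symm)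
    (fun s hs => chordEq_symm (hchord s hs)) hfb hfa hf'b hf'a hf''b hb ha
  simp only [DLdiff_swap] at h
  rwa [← neg_sub (b ℓ), div_neg, ← sub_eq_add_neg] at h

end Curve

theorem stmt18_general {U : Set ℝ} (hU : IsOpen U) {f : ℝ → ℝ}
    (hf : ∀ k < 3, DifferentiableOn ℝ (deriv^[k] f) U) {L : Set ℝ} (hL : UniqueDiffOn ℝ L)
    {a b a' b' : ℝ → ℝ} (haU : ∀ ℓ ∈ L, a ℓ ∈ U) (hbU : ∀ ℓ ∈ L, b ℓ ∈ U)
    (hne : ∀ ℓ ∈ L, a ℓ ≠ b ℓ)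
    (ha' : ∀ ℓ ∈ L, HasDerivWithinAt a (a' ℓ) L ℓ)
    (hb' : ∀ ℓ ∈ L, HasDerivWithinAt b (b' ℓ) L ℓ)
    (hchord : ∀ ℓ ∈ L, chordEq f (a ℓ) (b ℓ)) :
    ∀ ℓ ∈ L,
      DRdiff f (a ℓ) (b ℓ) * b' ℓ + DLdiff f (a ℓ) (b ℓ) * a' ℓ = 0 ∧
      HasDerivWithinAt (fun s => DLdiff f (a s) (b s))
        ((deriv (deriv (deriv f)) (a ℓ) +
            2 * DLdiff f (a ℓ) (b ℓ) / (b ℓ - a ℓ)) * a' ℓ) L ℓ ∧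
      HasDerivWithinAt (fun s => DRdiff f (a s) (b s))
        ((deriv (deriv (deriv f)) (b ℓ) -
            2 * DRdiff f (a ℓ) (b ℓ) / (b ℓ - a ℓ)) * b' ℓ) L ℓ := by
  intro ℓ hℓ
  have hdiff {k : ℕ} (hk : k < 3) {x : ℝ} (hx : x ∈ U) : DifferentiableAt ℝ (deriv^[k] f) x :=
    (hf k hk).differentiableAt (hU.mem_nhds hx)
  have hfa : DifferentiableAt ℝ f (a ℓ) := hdiff (k := 0) (by simp) (haU ℓ hℓ)
  have hfb : DifferentiableAt ℝ f (b ℓ) := hdiff (k := 0) (by simp) (hbU ℓ hℓ)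
  have hf'a : DifferentiableAt ℝ (deriv f) (a ℓ) := hdiff (k := 1) (by simp) (haU ℓ hℓ)
  have hf'b : DifferentiableAt ℝ (deriv f) (b ℓ) := hdiff (k := 1) (by simp) (hbU ℓ hℓ)
  have hf''a : DifferentiableAt ℝ (deriv (deriv f)) (a ℓ) := hdiff (k := 2) (by simp) (haU ℓ hℓ)
  have hf''b : DifferentiableAt ℝ (deriv (deriv f)) (b ℓ) := hdiff (k := 2) (by simp) (hbU ℓ hℓ)
  exact ⟨DRdiff_mul_add_DLdiff_mul_eq_zero (hL ℓ hℓ) hℓ hne hchord hfa hfb hf'a hf'b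
      (ha' ℓ hℓ) (hb' ℓ hℓ),
    hasDerivWithinAt_DLdiff_of_chordEq (hL ℓ hℓ) hℓ hne hchord hfa hfb hf'a hf'b hf''a
      (ha' ℓ hℓ) (hb' ℓ hℓ),
    hasDerivWithinAt_DRdiff_of_chordEq (hL ℓ hℓ) hℓ hne hchord hfa hfb hf'a hf'b hf''b
      (ha' ℓ hℓ) (hb' ℓ hℓ)⟩

theorem stmt18 (U : Set ℝ) (hUopen : IsOpen U) (hUord : OrdConnected U)
    (f : ℝ → ℝ) (hf : ContDiffOn ℝ 3 f U)
    (L : Set ℝ) (hLord : OrdConnected L)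
    (hLnontriv : ∃ ℓ₁ ∈ L, ∃ ℓ₂ ∈ L, ℓ₁ < ℓ₂)
    (a b a' b' : ℝ → ℝ)
    (haU : ∀ ℓ ∈ L, a ℓ ∈ U) (hbU : ∀ ℓ ∈ L, b ℓ ∈ U)
    (hab : ∀ ℓ ∈ L, a ℓ < b ℓ ∧ b ℓ - a ℓ = ℓ)
    (ha' : ∀ ℓ ∈ L, HasDerivWithinAt a (a' ℓ) L ℓ)
    (hb' : ∀ ℓ ∈ L, HasDerivWithinAt b (b' ℓ) L ℓ)
    (hchord : ∀ ℓ ∈ L, chordEq f (a ℓ) (b ℓ)) :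
    ∀ ℓ ∈ L,
      DRdiff f (a ℓ) (b ℓ) * b' ℓ + DLdiff f (a ℓ) (b ℓ) * a' ℓ = 0 ∧
      HasDerivWithinAt (fun s => DLdiff f (a s) (b s))
        ((deriv (deriv (deriv f)) (a ℓ) +
            2 * DLdiff f (a ℓ) (b ℓ) / (b ℓ - a ℓ)) * a' ℓ) L ℓ ∧
      HasDerivWithinAt (fun s => DRdiff f (a s) (b s))
        ((deriv (deriv (deriv f)) (b ℓ) -
            2 * DRdiff f (a ℓ) (b ℓ) / (b ℓ - a ℓ)) * b' ℓ) L ℓ :=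
  stmt18_general hUopen
    (fun k hk => differentiableOn_iterate_deriv hUopen hf (by exact_mod_cast hk))
    (uniqueDiffOn_of_ordConnected hLord (nontrivial_iff_exists_lt.2 hLnontriv))
    haU hbU (fun ℓ hℓ => (hab ℓ hℓ).1.ne) ha' hb' hchord
end

section
/- Let ε > 0 and w ∈ ℝ, and define φ : (0,1] → ℝ by φ(s) = ε·log s + w + ε. Then: (i) ∫₀¹ φ(s)ds = w and ∫₀¹ φ(s)²ds = w² + ε²; (ii) for every subinterval [α,β] ⊆ [0,1] with α < β one has ⟨φ²⟩_{[α,β]} − (⟨φ⟩_{[α,β]})² ≤ ε², i.e. φ ∈ BMO_ε([0,1]); (iii) if moreover 0 < ε < ε₀ and f ∈ 𝔚_{ε₀}, then f∘φ is integrable on (0,1) and ∫₀¹ f(φ(s))ds = f(w + ε) − e^{−(w+ε)/ε}∫_{−∞}^{w+ε} f'(t)e^{t/ε}dt. In particular, the Bellman point of φ is W = (w, w² + ε²) on the upper parabola, and ⟨f∘φ⟩_{[0,1]} equals the candidate value m_R(w+ε)·(w − (w+ε)) + f(w+ε), where m_R(u) = ε⁻¹e^{−u/ε}∫_{−∞}^u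 f'(t)e^{t/ε}dt. -/
open MeasureTheory Set Real

/-- The average of `φ` over the interval with endpoints `a`, `b`. -/
noncomputable def intAvg (φ : ℝ → ℝ) (a b : ℝ) : ℝ := (∫ t in a..b, φ t) / (b - a)

/-- `φ` belongs to the ball of radius `ε` of (quadratic-norm) BMO on the interval `(l, r)`. -/
def memBMOe (ε l r : ℝ) (φ : ℝ → ℝ) : Prop :=
  IntegrableOn φ (Ioo l r) ∧
  IntegrableOn (fun t => (φ t) ^ 2) (Ioo l r) ∧
  ∀ c d : ℝ, l ≤ c → c < d → d ≤ r →
    intAvg (fun t => (φ t) ^ 2) c d - (intAvg φ c d) ^ 2 ≤ ε ^ 2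

/-- The class `𝔚_{ε₀}`. -/
def memWcl (ε₀ : ℝ) (f f3 : ℝ → ℝ) : Prop :=
  ContDiff ℝ 2 f ∧
  (∀ x y : ℝ, x ≤ y → deriv (deriv f) y - deriv (deriv f) x = ∫ t in x..y, f3 t) ∧
  Integrable (fun t => f t * Real.exp (-|t| / ε₀)) ∧
  Integrable (fun t => deriv f t * Real.exp (-|t| / ε₀)) ∧
  Integrable (fun t => deriv (deriv f) t * Real.exp (-|t| / ε₀)) ∧
  Integrable (fun t => f3 t * Real.exp (-|t| / ε₀))

/-!
Up to an affine change, `φ` is the logarithm, whose variance over `[a, b]` is exactly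
`1 - a b (log b - log a)² / (b - a)²`; this is at most `1` when `0 ≤ a < b`, with equality at
`a = 0`. The substitution `s = exp ((t - u) / ε)`, `u = w + ε`, turns `∫₀¹ f (φ s) ds` into
`ε⁻¹ e^{-u/ε} ∫_{-∞}^u f(t) e^{t/ε} dt`, and an integration by parts moves the derivative onto `f`.
-/

/-- The variance `⟨φ²⟩ - ⟨φ⟩²` of `φ` over the interval with endpoints `a`, `b`, which is the
quantity bounded in `memBMOe`. -/
noncomputable def intVar (φ : ℝ → ℝ) (a b : ℝ) : ℝ :=
  intAvg (fun t => φ t ^ 2) a b - intAvg φ a b ^ 2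

section Affine

variable {ψ : ℝ → ℝ} {a b : ℝ}

theorem intAvg_const_mul_add (hψ : IntervalIntegrable ψ volume a b) (hab : a ≠ b) (k c : ℝ) :
    intAvg (fun t => k * ψ t + c) a b = k * intAvg ψ a b + c := by
  have hba : b - a ≠ 0 := sub_ne_zero.2 hab.symm
  rw [intAvg, intervalIntegral.integral_add (hψ.const_mul k) intervalIntegrable_const,
    intervalIntegral.integral_const_mul, intervalIntegral.integral_const, smul_eq_mul, intAvg]
  field_simp

theorem intervalIntegrable_const_mul_add_sq (hψ : IntervalIntegrable ψ volume a b)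
    (hψ₂ : IntervalIntegrable (fun t => ψ t ^ 2) volume a b) (k c : ℝ) :
    IntervalIntegrable (fun t => (k * ψ t + c) ^ 2) volume a b := by
  have expand (x : ℝ) : (k * x + c) ^ 2 = k ^ 2 * x ^ 2 + 2 * k * c * x + c ^ 2 := by ring
  simp only [expand]
  exact ((hψ₂.const_mul _).add (hψ.const_mul _)).add intervalIntegrable_const

theorem intAvg_const_mul_add_sq (hψ : IntervalIntegrable ψ volume a b)
    (hψ₂ : IntervalIntegrable (fun t => ψ t ^ 2) volume a b) (hab : a ≠ b) (k c : ℝ) :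
    intAvg (fun t => (k * ψ t + c) ^ 2) a b =
      k ^ 2 * intAvg (fun t => ψ t ^ 2) a b + 2 * k * c * intAvg ψ a b + c ^ 2 := by
  have hba : b - a ≠ 0 := sub_ne_zero.2 hab.symm
  have expand (x : ℝ) : (k * x + c) ^ 2 = k ^ 2 * x ^ 2 + 2 * k * c * x + c ^ 2 := by ring
  simp only [expand, intAvg]
  rw [intervalIntegral.integral_add ((hψ₂.const_mul _).add (hψ.const_mul _))
      intervalIntegrable_const,
    intervalIntegral.integral_add (hψ₂.const_mul _) (hψ.const_mul _),
    intervalIntegral.integral_const_mul, intervalIntegral.integral_const_mul,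
    intervalIntegral.integral_const, smul_eq_mul]
  field_simp

theorem intVar_const_mul_add (hψ : IntervalIntegrable ψ volume a b)
    (hψ₂ : IntervalIntegrable (fun t => ψ t ^ 2) volume a b) (hab : a ≠ b) (k c : ℝ) :
    intVar (fun t => k * ψ t + c) a b = k ^ 2 * intVar ψ a b := by
  rw [intVar, intAvg_const_mul_add_sq hψ hψ₂ hab, intAvg_const_mul_add hψ hab, intVar]
  ring

end Affine

section Log

theorem continuous_mul_log_sq : Continuous fun s : ℝ => s * log s ^ 2 := by
  refine continuous_iff_continuousAt.2 fun s => ?_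
  rcases eq_or_ne s 0 with rfl | hs
  · have sqrt_form (x : ℝ) : |x * log x ^ 2| = 4 * (√|x| * log √|x|) ^ 2 := by
      rw [abs_mul, abs_sq, mul_pow, sq_sqrt (abs_nonneg x), log_sqrt (abs_nonneg x), log_abs]
      ring
    have hcont : Continuous fun x : ℝ => 4 * (√|x| * log √|x|) ^ 2 :=
      ((continuous_mul_log.comp (continuous_sqrt.comp continuous_abs)).pow 2).const_mul 4
    simpa [ContinuousAt, tendsto_zero_iff_abs_tendsto_zero, Function.comp_def, sqrt_form]
      using hcont.tendsto 0
  · exact continuousAt_id.mul ((continuousAt_log hs).pow 2)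

theorem hasDerivAt_mul_log_sq_sub {s : ℝ} (hs : s ≠ 0) :
    HasDerivAt (fun s : ℝ => s * log s ^ 2 - 2 * (s * log s) + 2 * s) (log s ^ 2) s := by
  refine ((((hasDerivAt_id' s).fun_mul ((hasDerivAt_log hs).fun_pow 2)).fun_sub
    ((hasDerivAt_mul_log hs).const_mul 2)).fun_add ((hasDerivAt_id' s).const_mul 2)).congr_deriv ?_
  field_simp
  ring

theorem continuous_mul_log_sq_sub :
    Continuous fun s : ℝ => s * log s ^ 2 - 2 * (s * log s) + 2 * s :=
  (continuous_mul_log_sq.sub (continuous_mul_log.const_mul 2)).add (continuous_const_mul 2)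

theorem intervalIntegrable_log_sq (a b : ℝ) :
    IntervalIntegrable (fun s => log s ^ 2) volume a b := by
  refine intervalIntegrable_of_even (fun s => by rw [log_neg_eq_log]) fun r hr => ?_
  refine intervalIntegral.intervalIntegrable_deriv_of_nonneg
    continuous_mul_log_sq_sub.continuousOn (fun s hs => ?_) fun s _ => sq_nonneg _
  rw [min_eq_left hr.le] at hs
  exact hasDerivAt_mul_log_sq_sub hs.1.ne'

theorem integral_log_sq (a b : ℝ) :
    ∫ s in a..b, log s ^ 2 =
      (b * log b ^ 2 - 2 * (b * log b) + 2 * b) - (a * log a ^ 2 - 2 * (a * log a) + 2 * a) :=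
  integral_eq_of_hasDerivAt_off_countable _ _ (countable_singleton 0)
    continuous_mul_log_sq_sub.continuousOn (fun _ hs => hasDerivAt_mul_log_sq_sub hs.2)
    (intervalIntegrable_log_sq a b)

theorem intVar_log {a b : ℝ} (hab : a ≠ b) :
    intVar log a b = 1 - a * b * (log b - log a) ^ 2 / (b - a) ^ 2 := by
  have hba : b - a ≠ 0 := sub_ne_zero.2 hab.symm
  rw [intVar, intAvg, intAvg, integral_log_sq, integral_log]
  field_simp
  ring

theorem intVar_log_le_one {a b : ℝ} (hpos : 0 ≤ a * b) (hab : a ≠ b) : intVar log a b ≤ 1 := by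
  rw [intVar_log hab]
  exact sub_le_self _ (by positivity)

theorem intVar_const_mul_log_add {a b : ℝ} (hab : a ≠ b) (k c : ℝ) :
    intVar (fun s => k * log s + c) a b = k ^ 2 * intVar log a b :=
  intVar_const_mul_add intervalIntegral.intervalIntegrable_log' (intervalIntegrable_log_sq a b)
    hab k c

theorem integral_zero_one_const_mul_log_add (k c : ℝ) :
    ∫ s in (0 : ℝ)..1, (k * log s + c) = c - k := by
  have h := intAvg_const_mul_add (intervalIntegral.intervalIntegrable_log' (a := 0) (b := 1))
    zero_ne_one k c
  simp only [intAvg, integral_log, sub_zero, div_one, log_one, log_zero] at h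
  rw [h]
  ring

theorem integral_zero_one_const_mul_log_add_sq (k c : ℝ) :
    ∫ s in (0 : ℝ)..1, (k * log s + c) ^ 2 = (c - k) ^ 2 + k ^ 2 := by
  have h := intVar_const_mul_log_add zero_ne_one k c
  rw [intVar_log zero_ne_one, intVar, intAvg, intAvg, integral_zero_one_const_mul_log_add] at h
  simp only [sub_zero, div_one, zero_mul, zero_div, mul_one] at h
  linarith

theorem memBMOe_const_mul_log_add (k c : ℝ) {l : ℝ} (hl : 0 ≤ l) (r : ℝ) :
    memBMOe k l r (fun s => k * log s + c) := by
  have hlog : IntervalIntegrable log volume l r := intervalIntegral.intervalIntegrable_log'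
  have hφ : IntervalIntegrable (fun s => k * log s + c) volume l r :=
    (hlog.const_mul k).add intervalIntegrable_const
  have hφ₂ : IntervalIntegrable (fun s => (k * log s + c) ^ 2) volume l r :=
    intervalIntegrable_const_mul_add_sq hlog (intervalIntegrable_log_sq l r) k c
  refine ⟨hφ.1.mono_set Ioo_subset_Ioc_self, hφ₂.1.mono_set Ioo_subset_Ioc_self,
    fun a b hla hab _ => ?_⟩
  have ha : 0 ≤ a := hl.trans hla
  have hvar : intVar log a b ≤ 1 := intVar_log_le_one (mul_nonneg ha (ha.trans hab.le)) hab.ne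
  calc intVar (fun s => k * log s + c) a b
      = k ^ 2 * intVar log a b := intVar_const_mul_log_add hab.ne k c
    _ ≤ k ^ 2 := mul_le_of_le_one_right (sq_nonneg k) hvar

end Log

section ExpWeight

variable {E : Type*} [NormedAddCommGroup E] [NormedSpace ℝ E] {ε : ℝ}

theorem image_exp_sub_div_Iic (hε : 0 < ε) (u : ℝ) :
    (fun t => exp ((t - u) / ε)) '' Iic u = Ioc 0 1 := by
  ext s
  constructor
  · rintro ⟨t, ht, rfl⟩
    exact ⟨exp_pos _, exp_le_one_iff.2 (div_nonpos_of_nonpos_of_nonneg (sub_nonpos.2 ht) hε.le)⟩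
  · rintro ⟨hs₀, hs₁⟩
    refine ⟨ε * log s + u, ?_, ?_⟩
    · exact add_le_of_nonpos_left
        (mul_nonpos_of_nonneg_of_nonpos hε.le (log_nonpos hs₀.le hs₁))
    · simp only [add_sub_cancel_right, mul_div_cancel_left₀ _ hε.ne', exp_log hs₀]

theorem hasDerivAt_exp_sub_div (ε u t : ℝ) :
    HasDerivAt (fun t => exp ((t - u) / ε)) (ε⁻¹ * exp (-u / ε) * exp (t / ε)) t := by
  refine (((hasDerivAt_id' t).sub_const u).div_const ε).exp.congr_deriv ?_
  rw [sub_eq_neg_add, add_div, exp_add]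
  ring

theorem monotone_exp_sub_div (hε : 0 < ε) (u : ℝ) : Monotone fun t => exp ((t - u) / ε) :=
  fun _ _ h => exp_le_exp.2 (by gcongr)

theorem integrableOn_comp_const_mul_log_add_iff (hε : 0 < ε) (u : ℝ) (g : ℝ → E) :
    IntegrableOn (fun s => g (ε * log s + u)) (Ioc 0 1) ↔
      IntegrableOn (fun t => exp (t / ε) • g t) (Iic u) := by
  have hfactor : ε⁻¹ * exp (-u / ε) ≠ 0 := by positivity
  rw [← image_exp_sub_div_Iic hε u,
    integrableOn_image_iff_integrableOn_deriv_smul_of_monotoneOn measurableSet_Iic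
      (fun t _ => (hasDerivAt_exp_sub_div ε u t).hasDerivWithinAt)
      ((monotone_exp_sub_div hε u).monotoneOn _)]
  simp only [log_exp, mul_div_cancel₀ _ hε.ne', sub_add_cancel, mul_smul (ε⁻¹ * exp (-u / ε))]
  exact integrable_smul_iff hfactor fun t => exp (t / ε) • g t

theorem integral_comp_const_mul_log_add (hε : 0 < ε) (u : ℝ) (g : ℝ → E) :
    ∫ s in (0 : ℝ)..1, g (ε * log s + u) =
      (ε⁻¹ * exp (-u / ε)) • ∫ t in Iic u, exp (t / ε) • g t := by
  rw [intervalIntegral.integral_of_le zero_le_one, ← image_exp_sub_div_Iic hε u,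
    integral_image_eq_integral_deriv_smul_of_monotoneOn measurableSet_Iic
      (fun t _ => (hasDerivAt_exp_sub_div ε u t).hasDerivWithinAt)
      ((monotone_exp_sub_div hε u).monotoneOn _), ← integral_smul]
  simp only [log_exp, mul_div_cancel₀ _ hε.ne', sub_add_cancel, mul_smul]

theorem integral_Iic_exp_div_smul_deriv [CompleteSpace E] {u : ℝ} {f f' : ℝ → E}
    (hderiv : ∀ t ∈ Iic u, HasDerivAt f (f' t) t)
    (hf : IntegrableOn (fun t => exp (t / ε) • f t) (Iic u))
    (hf' : IntegrableOn (fun t => exp (t / ε) • f' t) (Iic u)) :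
    ∫ t in Iic u, exp (t / ε) • f' t =
      exp (u / ε) • f u - ε⁻¹ • ∫ t in Iic u, exp (t / ε) • f t := by
  have hprod (t : ℝ) (ht : t ∈ Iic u) : HasDerivAt (fun t => exp (t / ε) • f t)
      (exp (t / ε) • f' t + ε⁻¹ • exp (t / ε) • f t) t := by
    refine (((hasDerivAt_id' t).div_const ε).exp.fun_smul (hderiv t ht)).congr_deriv ?_
    rw [smul_smul, one_div, mul_comm]
  have hfε : IntegrableOn (fun t => ε⁻¹ • exp (t / ε) • f t) (Iic u) := hf.smul ε⁻¹
  have hint := hf'.add hfε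
  have hzero := tendsto_zero_of_hasDerivAt_of_integrableOn_Iic hprod hint hf
  have hftc := integral_Iic_of_hasDerivAt_of_tendsto' hprod hint hzero
  rw [integral_add hf' hfε, integral_smul, sub_zero] at hftc
  exact eq_sub_of_add_eq hftc

theorem integral_comp_const_mul_log_add_eq_sub [CompleteSpace E] (hε : 0 < ε) {u : ℝ}
    {f f' : ℝ → E} (hderiv : ∀ t ∈ Iic u, HasDerivAt f (f' t) t)
    (hf : IntegrableOn (fun t => exp (t / ε) • f t) (Iic u))
    (hf' : IntegrableOn (fun t => exp (t / ε) • f' t) (Iic u)) :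
    ∫ s in (0 : ℝ)..1, f (ε * log s + u) =
      f u - exp (-u / ε) • ∫ t in Iic u, exp (t / ε) • f' t := by
  have hexp : exp (-u / ε) * exp (u / ε) = 1 := by rw [← exp_add, neg_div, neg_add_cancel, exp_zero]
  rw [integral_comp_const_mul_log_add hε, integral_Iic_exp_div_smul_deriv hderiv hf hf', smul_sub,
    smul_smul, hexp, one_smul, sub_sub_cancel, smul_smul, mul_comm]

theorem monotone_div_add_abs_div {ε₀ : ℝ} (hε : 0 < ε) (hε₀ : ε ≤ ε₀) :
    Monotone fun t : ℝ => t / ε + |t| / ε₀ := by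
  intro s t hst
  have habs : |s| - |t| ≤ t - s := by
    simpa [abs_sub_comm s t, abs_of_nonneg (sub_nonneg.2 hst)] using abs_sub_abs_le_abs_sub s t
  have hdiv : (|s| - |t|) / ε₀ ≤ (t - s) / ε :=
    calc (|s| - |t|) / ε₀ ≤ (t - s) / ε₀ := div_le_div_of_nonneg_right habs (hε.le.trans hε₀)
      _ ≤ (t - s) / ε := div_le_div_of_nonneg_left (sub_nonneg.2 hst) hε hε₀
  rw [sub_div, sub_div] at hdiv
  dsimp only
  linarith

theorem integrableOn_Iic_exp_div_smul {ε₀ : ℝ} (hε : 0 < ε) (hε₀ : ε ≤ ε₀) (u : ℝ) {g : ℝ → E}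
    (hg : Integrable fun t => exp (-|t| / ε₀) • g t) :
    IntegrableOn (fun t => exp (t / ε) • g t) (Iic u) := by
  have hbdd : ∀ t ∈ Iic u, ‖exp (t / ε + |t| / ε₀)‖ ≤ exp (u / ε + |u| / ε₀) := fun t ht => by
    rw [norm_of_nonneg (exp_nonneg _)]
    exact exp_le_exp.2 (monotone_div_add_abs_div hε hε₀ ht)
  have hweight (t : ℝ) : exp (t / ε) = exp (t / ε + |t| / ε₀) * exp (-|t| / ε₀) := by
    rw [← exp_add, neg_div, add_neg_cancel_right]
  simp only [hweight, mul_smul]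
  exact hg.integrableOn.bdd_smul _ (Continuous.aestronglyMeasurable (by fun_prop))
    (ae_restrict_of_forall_mem measurableSet_Iic hbdd)

theorem memWcl.integrableOn_exp_div_smul {ε₀ : ℝ} {f f3 : ℝ → ℝ} (hf : memWcl ε₀ f f3)
    (hε : 0 < ε) (hε₀ : ε ≤ ε₀) (u : ℝ) :
    IntegrableOn (fun t => exp (t / ε) • f t) (Iic u) :=
  integrableOn_Iic_exp_div_smul hε hε₀ u
    (by simpa only [smul_eq_mul, mul_comm (exp _)] using hf.2.2.1)

theorem memWcl.integrableOn_exp_div_smul_deriv {ε₀ : ℝ} {f f3 : ℝ → ℝ} (hf : memWcl ε₀ f f3)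
    (hε : 0 < ε) (hε₀ : ε ≤ ε₀) (u : ℝ) :
    IntegrableOn (fun t => exp (t / ε) • deriv f t) (Iic u) :=
  integrableOn_Iic_exp_div_smul hε hε₀ u
    (by simpa only [smul_eq_mul, mul_comm (exp _)] using hf.2.2.2.1)

end ExpWeight

theorem stmt19_general {E : Type*} [NormedAddCommGroup E] [NormedSpace ℝ E] [CompleteSpace E]
    (ε w : ℝ) (hε : 0 < ε) :
    (∫ s in (0:ℝ)..1, (ε * log s + w + ε)) = w ∧
    (∫ s in (0:ℝ)..1, (ε * log s + w + ε) ^ 2) = w ^ 2 + ε ^ 2 ∧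
    (∀ l r : ℝ, 0 ≤ l → memBMOe ε l r (fun s => ε * log s + w + ε)) ∧
    (∀ f f' : ℝ → E, (∀ t ∈ Iic (w + ε), HasDerivAt f (f' t) t) →
      IntegrableOn (fun t => exp (t / ε) • f t) (Iic (w + ε)) →
      IntegrableOn (fun t => exp (t / ε) • f' t) (Iic (w + ε)) →
      IntegrableOn (fun s => f (ε * log s + w + ε)) (Ioo 0 1) ∧
      (∫ s in (0:ℝ)..1, f (ε * log s + w + ε)) =
        f (w + ε) - exp (-(w + ε) / ε) • ∫ t in Iic (w + ε), exp (t / ε) • f' t ∧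
      (∫ s in (0:ℝ)..1, f (ε * log s + w + ε)) =
        (w - (w + ε)) • ((ε⁻¹ * exp (-(w + ε) / ε)) • ∫ t in Iic (w + ε), exp (t / ε) • f' t) +
          f (w + ε)) := by
  simp only [add_assoc _ w ε]
  refine ⟨?_, ?_, fun l r hl => memBMOe_const_mul_log_add ε _ hl r, fun f f' hderiv hf hf' => ?_⟩
  · rw [integral_zero_one_const_mul_log_add, add_sub_cancel_right]
  · rw [integral_zero_one_const_mul_log_add_sq, add_sub_cancel_right]
  · have hvalue := integral_comp_const_mul_log_add_eq_sub hε hderiv hf hf'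
    refine ⟨((integrableOn_comp_const_mul_log_add_iff hε _ f).2 hf).mono_set Ioo_subset_Ioc_self,
      hvalue, ?_⟩
    rw [hvalue, sub_add_cancel_left, smul_smul, neg_mul, mul_inv_cancel_left₀ hε.ne', neg_smul,
      neg_add_eq_sub]

theorem stmt19 (ε w : ℝ) (hε : 0 < ε) :
    (∫ s in (0:ℝ)..1, (ε * Real.log s + w + ε)) = w ∧
    (∫ s in (0:ℝ)..1, (ε * Real.log s + w + ε) ^ 2) = w ^ 2 + ε ^ 2 ∧
    (∀ α β : ℝ, 0 ≤ α → α < β → β ≤ 1 →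
      intAvg (fun s => (ε * Real.log s + w + ε) ^ 2) α β -
        (intAvg (fun s => ε * Real.log s + w + ε) α β) ^ 2 ≤ ε ^ 2) ∧
    memBMOe ε 0 1 (fun s => ε * Real.log s + w + ε) ∧
    (∀ ε₀ : ℝ, ε < ε₀ → ∀ f f3 : ℝ → ℝ, memWcl ε₀ f f3 →
      IntegrableOn (fun s => f (ε * Real.log s + w + ε)) (Ioo 0 1) ∧
      (∫ s in (0:ℝ)..1, f (ε * Real.log s + w + ε)) =
        f (w + ε) - Real.exp (-(w + ε) / ε) *
          ∫ t in Iic (w + ε), deriv f t * Real.exp (t / ε) ∧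
      (∫ s in (0:ℝ)..1, f (ε * Real.log s + w + ε)) =
        (ε⁻¹ * Real.exp (-(w + ε) / ε) *
            ∫ t in Iic (w + ε), deriv f t * Real.exp (t / ε)) *
          (w - (w + ε)) + f (w + ε)) := by
  obtain ⟨mean, mean_sq, bmo, value⟩ := stmt19_general (E := ℝ) ε w hε
  refine ⟨mean, mean_sq, fun α β hα hαβ _ => (bmo α β hα).2.2 α β le_rfl hαβ le_rfl,
    bmo 0 1 le_rfl, fun ε₀ hε₀ f f3 hf => ?_⟩
  simpa only [smul_eq_mul, mul_comm] using value f (deriv f)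
    (fun t _ => (hf.1.differentiable two_ne_zero t).hasDerivAt)
    (hf.integrableOn_exp_div_smul hε hε₀.le _) (hf.integrableOn_exp_div_smul_deriv hε hε₀.le _)
end
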